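/- Let Q be one of the graphs A_n (n ≥ 1), D_n (n ≥ 4), E_6, E_7 or E_8. Then the Birman–Murakami–Wenzl algebra B(Q) over K = ℚ(l,δ) is quasi-hereditary. -/

import Mathlib

open FreeAlgebra

open Pointwise in
/-- A two-sided ideal `J` of a ring `A` is a heredity ideal if `J·J = J`,
`J·rad(A)·J = 0` (where `rad(A)` is the Jacobson radical), and `J` is
projective as a left `A`-module. -/
def IsHeredityIdeal (A : Type*) [Ring A] (J : TwoSidedIdeal A) : Prop :=
  Submodule.span A ((J : Set A) * (J : Set A)) = TwoSidedIdeal.asIdeal J ∧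
  (∀ x ∈ J, ∀ y ∈ Ideal.jacobson (⊥ : Ideal A), ∀ z ∈ J, x * y * z = 0) ∧
  Module.Projective A (TwoSidedIdeal.asIdeal J)

/-- A ring `A` is quasi-hereditary if there is a finite chain of two-sided ideals
`0 = J_0 ⊆ J_1 ⊆ ⋯ ⊆ J_m = A` such that `J_j/J_{j-1}` is a heredity ideal of
`A/J_{j-1}` for each `1 ≤ j ≤ m`. -/
def IsQuasiHereditary (A : Type*) [Ring A] : Prop :=
  ∃ (m : ℕ) (J : Fin (m + 1) → TwoSidedIdeal A),
    Monotone J ∧ J 0 = ⊥ ∧ J (Fin.last m) = ⊤ ∧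
    ∀ j : Fin m,
      IsHeredityIdeal ((J j.castSucc).ringCon.Quotient)
        (TwoSidedIdeal.map ((J j.castSucc).ringCon.mk') (J j.succ))
/-- The path graph (Coxeter diagram of type `A_n`) on nodes `1, …, n`
(realized as `Fin n`, node `i` corresponding to index `i-1`): node `i` is
adjacent to node `i+1` for `1 ≤ i ≤ n-1`. -/
def typeA (n : ℕ) : SimpleGraph (Fin n) :=
  SimpleGraph.fromRel (fun i j => (i : ℕ) + 1 = (j : ℕ))

/-- The Coxeter diagram of type `D_n` (`n ≥ 4`) on nodes `1, …, n` (realized as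
`Fin n`, node `i` corresponding to index `i-1`): nodes `1` and `2` are both
adjacent to node `3`, and nodes `i`, `i+1` are adjacent for `3 ≤ i ≤ n-1`. -/
def typeD (n : ℕ) : SimpleGraph (Fin n) :=
  SimpleGraph.fromRel (fun i j =>
    ((i : ℕ) = 0 ∧ (j : ℕ) = 2) ∨ ((i : ℕ) = 1 ∧ (j : ℕ) = 2) ∨
      (2 ≤ (i : ℕ) ∧ (i : ℕ) + 1 = (j : ℕ)))

/-- The Coxeter diagram of type `E_n` (`n = 6, 7, 8`) on nodes `1, …, n`
(realized as `Fin n`, node `i` corresponding to index `i-1`): a path on nodes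
`1, 3, 4, …, n` together with node `2` attached to node `4`. -/
def typeE (n : ℕ) : SimpleGraph (Fin n) :=
  SimpleGraph.fromRel (fun i j =>
    ((i : ℕ) = 0 ∧ (j : ℕ) = 2) ∨ ((i : ℕ) = 1 ∧ (j : ℕ) = 3) ∨
      (2 ≤ (i : ℕ) ∧ (i : ℕ) + 1 = (j : ℕ)))
/-- The field `K = ℚ(l,δ)` of rational functions over `ℚ` in two independent
variables `l` and `δ`, realized as an iterated rational function field. -/
abbrev BMWField : Type := RatFunc (RatFunc ℚ)

/-- The variable `l` of `K = ℚ(l,δ)`. -/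
noncomputable def lVar : BMWField := RatFunc.X

/-- The variable `δ` of `K = ℚ(l,δ)`. -/
noncomputable def deltaVar : BMWField := RatFunc.C RatFunc.X

/-- The element `m = (l - l⁻¹)/(1 - δ)` of `K = ℚ(l,δ)`. -/
noncomputable def mVar : BMWField := (lVar - lVar⁻¹) / (1 - deltaVar)

/-- The defining relations of the Birman–Murakami–Wenzl algebra `B(Q)` of the
simply-laced type given by the graph `Q`, imposed on the free algebra over
`K = ℚ(l,δ)` on the generators `g_1, …, g_n` (encoded as `Sum.inl i`) and
`e_1, …, e_n` (encoded as `Sum.inr i`). -/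
inductive BMWRel (n : ℕ) (Q : SimpleGraph (Fin n)) :
    FreeAlgebra BMWField (Fin n ⊕ Fin n) → FreeAlgebra BMWField (Fin n ⊕ Fin n) → Prop
  /-- `g_i g_j = g_j g_i` whenever `i ≁ j` -/
  | gg (i j : Fin n) (hne : i ≠ j) (hadj : ¬ Q.Adj i j) :
      BMWRel n Q (ι BMWField (.inl i) * ι BMWField (.inl j))
        (ι BMWField (.inl j) * ι BMWField (.inl i))
  /-- `g_i g_j g_i = g_j g_i g_j` whenever `i ∼ j` -/
  | braid (i j : Fin n) (hadj : Q.Adj i j) :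
      BMWRel n Q (ι BMWField (.inl i) * ι BMWField (.inl j) * ι BMWField (.inl i))
        (ι BMWField (.inl j) * ι BMWField (.inl i) * ι BMWField (.inl j))
  /-- `m·e_i = l·(g_i² + m·g_i - 1)` -/
  | quad (i : Fin n) :
      BMWRel n Q (mVar • ι BMWField (.inr i))
        (lVar • (ι BMWField (.inl i) * ι BMWField (.inl i)
          + mVar • ι BMWField (.inl i) - 1))
  /-- `g_i e_i = l⁻¹·e_i` -/
  | ge (i : Fin n) :
      BMWRel n Q (ι BMWField (.inl i) * ι BMWField (.inr i)) (lVar⁻¹ • ι BMWField (.inr i))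
  /-- `e_i g_j e_i = l·e_i` whenever `i ∼ j` -/
  | ege (i j : Fin n) (hadj : Q.Adj i j) :
      BMWRel n Q (ι BMWField (.inr i) * ι BMWField (.inl j) * ι BMWField (.inr i))
        (lVar • ι BMWField (.inr i))

/-- The Birman–Murakami–Wenzl algebra `B(Q)` of simply-laced type `Q` over
the rational function field `K = ℚ(l,δ)`. -/
abbrev BMWAlgebra (n : ℕ) (Q : SimpleGraph (Fin n)) : Type :=
  RingQuot (BMWRel n Q)

/-!
Choose a valuation ring `O` of `ℚ(l, δ)` with residue field of characteristic zero whose maximal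
ideal contains `l - 1` and `δ⁻¹`, and hence also `m` and `m δ`. Put `ε i = δ⁻¹ e i`, and let `L` be
the `O`-subalgebra of `B(Q)` generated by the `g i` and the `ε i`. Modulo the maximal ideal these
generators satisfy the relations of the simply-laced Brauer algebra at infinite parameter: the `g i`
become the simple reflections of the finite Weyl group, the `ε i` become commuting idempotents which
extend to a family of idempotents indexed by the roots, and `ε i ε j = 0` for adjacent nodes.
Therefore the special fibre of `L` is a quotient of the group algebra of a finite group generated by
the `g i` and the involutions `1 - 2 ε i`, and it is semisimple by Maschke's theorem.

By Tits' solution of the word problem, braid moves create a square in every word in the `g i` and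
`ε i` that is longer than the longest element of the Weyl group. By Nakayama's lemma it follows that
`L` is a finite, hence free, `O`-module. Semiprimeness lifts from the special fibre to `L` and
passes to `B(Q) = K ⊗ L`, which is therefore semisimple. A semisimple algebra is quasi-hereditary
with respect to the chain `0 ⊆ A`.
-/

/-! ### Words and braid moves -/

section Words

variable {V : Type*} {Q : SimpleGraph V}

/-- The product `s i₁ ⋯ s iₖ` along a word `[i₁, …, iₖ]` in the nodes of a Coxeter diagram. It is
used for simple reflections, for generators of algebras, and for submodules. -/
def wordProd {M : Type*} [Monoid M] (s : V → M) (x : List V) : M := (x.map s).prod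

/-- One application of a defining relation of the Artin group of `Q` inside a word. -/
inductive BraidMove (Q : SimpleGraph V) : List V → List V → Prop
  | comm (a b : List V) {i j : V} (hne : i ≠ j) (hadj : ¬ Q.Adj i j) :
      BraidMove Q (a ++ i :: j :: b) (a ++ j :: i :: b)
  | braid (a b : List V) {i j : V} (hadj : Q.Adj i j) :
      BraidMove Q (a ++ i :: j :: i :: b) (a ++ j :: i :: j :: b)

/-- Equality of words in the Artin monoid of `Q`. The reflexive transitive closure is already
symmetric because every braid move is reversible. -/
abbrev BraidEquiv (Q : SimpleGraph V) : List V → List V → Prop :=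
  Relation.ReflTransGen (BraidMove Q)

/-- A word is reducible if braid moves can create a square `i i` in it. -/
def IsReducibleWord (Q : SimpleGraph V) (x : List V) : Prop :=
  ∃ a i b, BraidEquiv Q x (a ++ i :: i :: b)

section WordProd

variable {M : Type*} [Monoid M] {s : V → M}

@[simp] lemma wordProd_nil : wordProd s [] = 1 := rfl

@[simp] lemma wordProd_cons (i : V) (x : List V) :
    wordProd s (i :: x) = s i * wordProd s x := by
  simp only [wordProd, List.map_cons, List.prod_cons]

@[simp] lemma wordProd_append (x y : List V) :
    wordProd s (x ++ y) = wordProd s x * wordProd s y := by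
  simp only [wordProd, List.map_append, List.prod_append]

lemma map_wordProd {N : Type*} [Monoid N] (f : M →* N) (x : List V) :
    f (wordProd s x) = wordProd (f ∘ s) x := by
  simp only [wordProd, map_list_prod, List.map_map]

lemma wordProd_deleteSquare (hs : ∀ i, s i * s i = 1) (a : List V) (i : V) (b : List V) :
    wordProd s (a ++ i :: i :: b) = wordProd s (a ++ b) := by
  simp only [wordProd_append, wordProd_cons, ← mul_assoc (s i), hs, one_mul]

lemma wordProd_mul_reverse (hs : ∀ i, s i * s i = 1) (x : List V) :
    wordProd s x * wordProd s x.reverse = 1 := by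
  induction x with
  | nil => simp
  | cons i x ih =>
    calc wordProd s (i :: x) * wordProd s (i :: x).reverse
        = s i * (wordProd s x * wordProd s x.reverse) * s i := by
          simp only [List.reverse_cons, wordProd_cons, wordProd_append, wordProd_nil, mul_one,
            mul_assoc]
      _ = 1 := by rw [ih, mul_one, hs]

lemma exists_wordProd_eq_of_mem_closure {G : Type*} [Group G] {g : V → G}
    (hg : ∀ i, g i * g i = 1) {w : G} (hw : w ∈ Subgroup.closure (Set.range g)) :
    ∃ x, wordProd g x = w := by
  induction hw using Subgroup.closure_induction with
  | mem w hw => obtain ⟨i, rfl⟩ := hw; exact ⟨[i], by simp⟩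
  | one => exact ⟨[], rfl⟩
  | mul v w _ _ hv hw =>
    obtain ⟨x, rfl⟩ := hv
    obtain ⟨y, rfl⟩ := hw
    exact ⟨x ++ y, wordProd_append x y⟩
  | inv w _ hw =>
    obtain ⟨x, rfl⟩ := hw
    exact ⟨x.reverse, (inv_eq_of_mul_eq_one_right (wordProd_mul_reverse hg x)).symm⟩

lemma wordProd_eq_of_braidEquiv (hcomm : ∀ i j, i ≠ j → ¬ Q.Adj i j → s i * s j = s j * s i)
    (hbraid : ∀ i j, Q.Adj i j → s i * s j * s i = s j * s i * s j) {x y : List V}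
    (h : BraidEquiv Q x y) : wordProd s x = wordProd s y := by
  induction h with
  | refl => rfl
  | tail _ hmove ih =>
    rw [ih]
    cases hmove with
    | comm a b hne hadj =>
      simp only [wordProd_append, wordProd_cons, ← mul_assoc (s _) (s _), hcomm _ _ hne hadj]
    | braid a b hadj =>
      have hbraid' := congrArg (wordProd s a * · * wordProd s b) (hbraid _ _ hadj)
      simpa only [wordProd_append, wordProd_cons, mul_assoc] using hbraid'

end WordProd

lemma BraidEquiv.length_eq {x y : List V} (h : BraidEquiv Q x y) : x.length = y.length := by
  induction h with
  | refl => rfl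
  | tail _ hmove ih => rw [ih]; cases hmove <;> simp

lemma BraidEquiv.length_lt {x y : List V} {i : V} (h : BraidEquiv Q x (y ++ [i])) :
    y.length < x.length := by
  simp [h.length_eq]

lemma BraidEquiv.append_append {x y : List V} (h : BraidEquiv Q x y) (c d : List V) :
    BraidEquiv Q (c ++ x ++ d) (c ++ y ++ d) := by
  refine Relation.ReflTransGen.lift (c ++ · ++ d) (fun x y hmove => ?_) _ _ h
  cases hmove with
  | comm a b hne hadj => simpa [Function.onFun] using BraidMove.comm (c ++ a) (b ++ d) hne hadj
  | braid a b hadj => simpa [Function.onFun] using BraidMove.braid (c ++ a) (b ++ d) hadj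

lemma BraidEquiv.append_right {x y : List V} (h : BraidEquiv Q x y) (d : List V) :
    BraidEquiv Q (x ++ d) (y ++ d) := by
  simpa using BraidEquiv.append_append h [] d

lemma IsReducibleWord.of_braidEquiv {x y : List V} (hy : IsReducibleWord Q y)
    (h : BraidEquiv Q x y) : IsReducibleWord Q x :=
  let ⟨a, i, b, hy⟩ := hy
  ⟨a, i, b, h.trans hy⟩

lemma IsReducibleWord.append_append {x : List V} (h : IsReducibleWord Q x) (c d : List V) :
    IsReducibleWord Q (c ++ x ++ d) := by
  obtain ⟨a, i, b, h⟩ := h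
  exact ⟨c ++ a, i, b ++ d, by simpa using BraidEquiv.append_append h c d⟩

lemma IsReducibleWord.append_right {x : List V} (h : IsReducibleWord Q x) (d : List V) :
    IsReducibleWord Q (x ++ d) := by
  simpa using h.append_append [] d

end Words

/-! ### Roots of a positive definite Tits form -/

section Roots

/-- The simple root attached to a node, as a standard basis vector of `ℤ^V`. -/
abbrev simpleRoot {V : Type*} [DecidableEq V] (i : V) : V → ℤ := Pi.single i 1

lemma simpleRoot_nonneg {V : Type*} [DecidableEq V] (i : V) : 0 ≤ simpleRoot i :=
  Pi.single_nonneg.2 zero_le_one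

variable {V : Type*} [Fintype V]

/-- The sum of the coordinates of a root with respect to the simple roots. -/
def rootHeight (v : V → ℤ) : ℤ := ∑ i, v i

lemma rootHeight_add (v w : V → ℤ) : rootHeight (v + w) = rootHeight v + rootHeight w :=
  Finset.sum_add_distrib

lemma rootHeight_sub (v w : V → ℤ) : rootHeight (v - w) = rootHeight v - rootHeight w :=
  Finset.sum_sub_distrib _ _

lemma rootHeight_nonneg {v : V → ℤ} (h : 0 ≤ v) : 0 ≤ rootHeight v :=
  Finset.sum_nonneg fun i _ => h i

lemma rootHeight_pos {v : V → ℤ} (h : 0 ≤ v) (hne : v ≠ 0) : 0 < rootHeight v :=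
  Fintype.sum_pos (lt_of_le_of_ne h hne.symm)

variable [DecidableEq V]

open scoped Classical in
/-- The symmetric bilinear form on `ℤ^V` whose Gram matrix is the simply-laced generalized Cartan
matrix of `Q`. -/
noncomputable def titsForm (Q : SimpleGraph V) : LinearMap.BilinForm ℤ (V → ℤ) :=
  Matrix.toBilin' (Matrix.diagonal 2 - Q.adjMatrix ℤ)

/-- The Tits form of `Q` is positive definite. By the classical classification, this means that
every connected component of `Q` is a diagram of type `A`, `D` or `E`. -/
def IsFiniteType (Q : SimpleGraph V) : Prop :=
  ∀ v : V → ℤ, v ≠ 0 → 0 < titsForm Q v v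

/-- The reflection of `ℤ^V` in the simple root attached to a node. -/
noncomputable def simpleReflection (Q : SimpleGraph V) (i : V) : Module.End ℤ (V → ℤ) :=
  LinearMap.id - ((titsForm Q).flip (simpleRoot i)).smulRight (simpleRoot i)

/-- The vectors of squared length `2`. In finite type these are the roots of the root system of
`Q`. -/
def IsRoot (Q : SimpleGraph V) (v : V → ℤ) : Prop := titsForm Q v v = 2

/-- The action of a word in the nodes of `Q` on the root lattice. -/
local notation "act[" Q "]" => wordProd (simpleReflection Q)

variable {Q : SimpleGraph V}

section TitsForm

lemma titsForm_comm (v w : V → ℤ) : titsForm Q v w = titsForm Q w v := by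
  classical
  rw [titsForm, Matrix.toBilin'_apply', Matrix.toBilin'_apply', dotProduct_comm,
    Matrix.dotProduct_mulVec, ← Matrix.mulVec_transpose, Matrix.transpose_sub,
    SimpleGraph.transpose_adjMatrix, Matrix.diagonal_transpose]

@[simp] lemma titsForm_simpleRoot_self (i : V) : titsForm Q (simpleRoot i) (simpleRoot i) = 2 := by
  simp [titsForm]

lemma titsForm_simpleRoot_of_adj {i j : V} (h : Q.Adj i j) :
    titsForm Q (simpleRoot i) (simpleRoot j) = -1 := by
  simp [titsForm, h, h.ne]

lemma titsForm_simpleRoot_of_not_adj {i j : V} (hne : i ≠ j) (h : ¬ Q.Adj i j) :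
    titsForm Q (simpleRoot i) (simpleRoot j) = 0 := by
  simp [titsForm, h, hne]

lemma titsForm_eq_sum (v w : V → ℤ) :
    titsForm Q v w = ∑ i, w i * titsForm Q v (simpleRoot i) := by
  calc titsForm Q v w = titsForm Q v (∑ i, w i • simpleRoot i) := by rw [← pi_eq_sum_univ' w]
    _ = ∑ i, w i * titsForm Q v (simpleRoot i) := by simp only [map_sum, map_smul, smul_eq_mul]

lemma even_titsForm_self (v : V → ℤ) : Even (titsForm Q v v) := by
  refine Pi.single_induction (fun v => Even (titsForm Q v v)) v (by simp) ?_ ?_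
  · intro v w hv hw
    have hvw : titsForm Q (v + w) (v + w)
        = titsForm Q v v + titsForm Q w w + 2 * titsForm Q v w := by
      simp only [map_add, LinearMap.add_apply, titsForm_comm w v]; ring
    rw [hvw]
    exact (hv.add hw).add (even_two_mul _)
  · intro i m
    have hsingle : (Pi.single i m : V → ℤ) = m • simpleRoot i := by simp [← Pi.single_smul]
    simp only [hsingle, map_smul, LinearMap.smul_apply, smul_eq_mul, titsForm_simpleRoot_self]
    exact (even_two.mul_left m).mul_left m

lemma titsForm_nonpos_of_disjoint_support {v w : V → ℤ} (hv : 0 ≤ v) (hw : 0 ≤ w)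
    (hvw : ∀ i, v i * w i = 0) : titsForm Q v w ≤ 0 := by
  classical
  rw [titsForm, Matrix.toBilin'_apply]
  refine Finset.sum_nonpos fun i _ => Finset.sum_nonpos fun j _ => ?_
  obtain rfl | hij := eq_or_ne i j
  · rw [mul_right_comm, hvw, zero_mul]
  · have hC : (Matrix.diagonal 2 - Q.adjMatrix ℤ : Matrix V V ℤ) i j ≤ 0 := by
      simp only [Matrix.sub_apply, Matrix.diagonal_apply_ne _ hij, SimpleGraph.adjMatrix_apply]
      split_ifs <;> simp
    exact mul_nonpos_of_nonpos_of_nonneg (mul_nonpos_of_nonneg_of_nonpos (hv i) hC) (hw j)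

end TitsForm

section Reflections

lemma simpleReflection_apply (i : V) (v : V → ℤ) :
    simpleReflection Q i v = v - titsForm Q v (simpleRoot i) • simpleRoot i := by
  simp [simpleReflection]

lemma titsForm_simpleReflection (i : V) (v w : V → ℤ) :
    titsForm Q (simpleReflection Q i v) (simpleReflection Q i w) = titsForm Q v w := by
  simp only [simpleReflection_apply, map_sub, map_smul, LinearMap.sub_apply, LinearMap.smul_apply,
    smul_eq_mul, titsForm_simpleRoot_self, titsForm_comm (simpleRoot i) w]
  ring

lemma simpleReflection_simpleReflection (i : V) (v : V → ℤ) :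
    simpleReflection Q i (simpleReflection Q i v) = v := by
  simp only [simpleReflection_apply, map_sub, map_smul, titsForm_simpleRoot_self]
  module

lemma simpleReflection_mul_self (i : V) : simpleReflection Q i * simpleReflection Q i = 1 :=
  LinearMap.ext (simpleReflection_simpleReflection i)

lemma simpleReflection_simpleRoot_self (i : V) :
    simpleReflection Q i (simpleRoot i) = -simpleRoot i := by
  rw [simpleReflection_apply, titsForm_simpleRoot_self]; module

lemma simpleReflection_simpleRoot_of_adj {i j : V} (h : Q.Adj i j) :
    simpleReflection Q i (simpleRoot j) = simpleRoot j + simpleRoot i := by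
  rw [simpleReflection_apply, titsForm_simpleRoot_of_adj h.symm]; module

lemma simpleReflection_simpleRoot_of_not_adj {i j : V} (hne : i ≠ j) (h : ¬ Q.Adj i j) :
    simpleReflection Q i (simpleRoot j) = simpleRoot j := by
  rw [simpleReflection_apply, titsForm_simpleRoot_of_not_adj hne.symm (h ∘ .symm)]; module

lemma simpleReflection_comm (i j : V) (hne : i ≠ j) (h : ¬ Q.Adj i j) :
    simpleReflection Q i * simpleReflection Q j = simpleReflection Q j * simpleReflection Q i := by
  refine LinearMap.ext fun v => ?_
  simp only [Module.End.mul_apply, simpleReflection_apply, map_sub, map_smul,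
    titsForm_simpleRoot_of_not_adj hne h,
    titsForm_simpleRoot_of_not_adj hne.symm (h ∘ .symm)]
  module

lemma simpleReflection_braid (i j : V) (h : Q.Adj i j) :
    simpleReflection Q i * simpleReflection Q j * simpleReflection Q i
      = simpleReflection Q j * simpleReflection Q i * simpleReflection Q j := by
  refine LinearMap.ext fun v => ?_
  simp only [Module.End.mul_apply, simpleReflection_apply, map_sub, map_smul,
    titsForm_simpleRoot_self, titsForm_simpleRoot_of_adj h,
    titsForm_simpleRoot_of_adj h.symm]
  module

lemma titsForm_act (x : List V) (v w : V → ℤ) :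
    titsForm Q (act[Q] x v) (act[Q] x w) = titsForm Q v w := by
  induction x with
  | nil => rfl
  | cons i x ih =>
    rw [wordProd_cons, Module.End.mul_apply, Module.End.mul_apply, titsForm_simpleReflection, ih]

lemma act_append_apply (x : List V) (i : V) (v : V → ℤ) :
    act[Q] (x ++ [i]) v = act[Q] x (simpleReflection Q i v) := by
  simp

lemma act_eq_of_braidEquiv {x y : List V} (h : BraidEquiv Q x y) : act[Q] x = act[Q] y :=
  wordProd_eq_of_braidEquiv simpleReflection_comm simpleReflection_braid h

lemma act_simpleRoot_of_braidEquiv_concat {x y : List V} {i j : V}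
    (h : BraidEquiv Q x (y ++ [i])) (hadj : Q.Adj i j) :
    act[Q] y (simpleRoot j) = act[Q] x (simpleRoot i) + act[Q] x (simpleRoot j) := by
  rw [← map_add, act_eq_of_braidEquiv h, act_append_apply, map_add,
    simpleReflection_simpleRoot_self, simpleReflection_simpleRoot_of_adj hadj,
    neg_add_cancel_comm_assoc]

end Reflections

section FiniteType

@[simp] lemma rootHeight_simpleRoot (i : V) : rootHeight (simpleRoot i) = 1 := by
  simp [rootHeight, simpleRoot]

lemma isRoot_simpleRoot (i : V) : IsRoot Q (simpleRoot i) := titsForm_simpleRoot_self i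

lemma IsRoot.act {v : V → ℤ} (hv : IsRoot Q v) (x : List V) : IsRoot Q (act[Q] x v) := by
  rw [IsRoot, titsForm_act]; exact hv

lemma IsRoot.map_simpleReflection {v : V → ℤ} (hv : IsRoot Q v) (i : V) :
    IsRoot Q (simpleReflection Q i v) := by
  rw [IsRoot, titsForm_simpleReflection]; exact hv

lemma IsRoot.neg {v : V → ℤ} (hv : IsRoot Q v) : IsRoot Q (-v) := by
  simpa [IsRoot] using hv

lemma IsRoot.ne_zero {v : V → ℤ} (hv : IsRoot Q v) : v ≠ 0 := by
  rintro rfl; simp [IsRoot] at hv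

lemma IsRoot.not_nonpos_of_nonneg {v : V → ℤ} (hv : IsRoot Q v) (h : 0 ≤ v) : ¬ v ≤ 0 :=
  fun h' => hv.ne_zero (le_antisymm h' h)

lemma IsFiniteType.two_le_titsForm_self (hQ : IsFiniteType Q) {v : V → ℤ} (hv : v ≠ 0) :
    2 ≤ titsForm Q v v := by
  have hpos := hQ v hv
  obtain ⟨k, hk⟩ := even_titsForm_self (Q := Q) v
  omega

lemma IsRoot.nonneg_or_nonpos (hQ : IsFiniteType Q) {v : V → ℤ} (hv : IsRoot Q v) :
    0 ≤ v ∨ v ≤ 0 := by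
  by_contra! h
  have hpos : 2 ≤ titsForm Q v⁺ v⁺ := hQ.two_le_titsForm_self (mt posPart_eq_zero.1 h.2)
  have hneg : 2 ≤ titsForm Q v⁻ v⁻ := hQ.two_le_titsForm_self (mt negPart_eq_zero.1 h.1)
  have hcross : titsForm Q v⁺ v⁻ ≤ 0 := by
    refine titsForm_nonpos_of_disjoint_support (posPart_nonneg v) (negPart_nonneg v) fun i => ?_
    rcases le_total (v i) 0 with hi | hi <;> simp [hi]
  have hexpand : titsForm Q v v
      = titsForm Q v⁺ v⁺ + titsForm Q v⁻ v⁻ - 2 * titsForm Q v⁺ v⁻ := by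
    conv_lhs => rw [← posPart_sub_negPart v]
    simp only [map_sub, LinearMap.sub_apply, titsForm_comm v⁻ v⁺]
    ring
  rw [IsRoot] at hv
  omega

lemma titsForm_sub_self {v w : V → ℤ} (hv : IsRoot Q v) (hw : IsRoot Q w) :
    titsForm Q (v - w) (v - w) = 4 - 2 * titsForm Q v w := by
  rw [IsRoot] at hv hw
  simp only [map_sub, LinearMap.sub_apply, titsForm_comm w v, hv, hw]
  ring

lemma IsRoot.titsForm_le_two (hQ : IsFiniteType Q) {v w : V → ℤ} (hv : IsRoot Q v)
    (hw : IsRoot Q w) : titsForm Q v w ≤ 2 := by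
  have hsub := titsForm_sub_self hv hw
  have hnonneg : 0 ≤ titsForm Q (v - w) (v - w) := by
    obtain h | h := eq_or_ne (v - w) 0
    · simp [h]
    · exact (hQ _ h).le
  omega

lemma IsRoot.neg_two_le_titsForm (hQ : IsFiniteType Q) {v w : V → ℤ} (hv : IsRoot Q v)
    (hw : IsRoot Q w) : -2 ≤ titsForm Q v w := by
  have h := hv.neg.titsForm_le_two hQ hw
  rw [map_neg, LinearMap.neg_apply] at h
  omega

lemma IsRoot.eq_of_titsForm_eq_two (hQ : IsFiniteType Q) {v w : V → ℤ} (hv : IsRoot Q v)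
    (hw : IsRoot Q w) (h : titsForm Q v w = 2) : v = w := by
  by_contra hne
  have hsub := titsForm_sub_self hv hw
  have hpos := hQ _ (sub_ne_zero.2 hne)
  omega

lemma IsRoot.titsForm_nonpos_of_ne (hQ : IsFiniteType Q) {v w : V → ℤ} (hv : IsRoot Q v)
    (hw : IsRoot Q w) (hne : v ≠ w) (hone : titsForm Q v w ≠ 1) : titsForm Q v w ≤ 0 := by
  have hle := hv.titsForm_le_two hQ hw
  have htwo := mt (hv.eq_of_titsForm_eq_two hQ hw) hne
  omega

lemma IsFiniteType.finite_setOf_isRoot (hQ : IsFiniteType Q) : {v | IsRoot Q v}.Finite := by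
  have hinj : Function.Injective fun (v : V → ℤ) (i : V) => titsForm Q v (simpleRoot i) := by
    intro v w h
    by_contra hne
    have hzero (i : V) : titsForm Q (v - w) (simpleRoot i) = 0 := by
      rw [map_sub, LinearMap.sub_apply, sub_eq_zero]; exact congrFun h i
    have hpos := hQ _ (sub_ne_zero.2 hne)
    rw [titsForm_eq_sum] at hpos
    simp only [hzero, mul_zero, Finset.sum_const_zero, lt_irrefl] at hpos
  have hbox : (Set.univ.pi fun _ : V => Set.Icc (-2 : ℤ) 2).Finite :=
    Set.Finite.pi fun _ => Set.finite_Icc _ _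
  refine Set.Finite.of_finite_image (hbox.subset ?_) hinj.injOn
  rintro _ ⟨v, hv, rfl⟩ i -
  exact ⟨hv.neg_two_le_titsForm hQ (isRoot_simpleRoot i),
    hv.titsForm_le_two hQ (isRoot_simpleRoot i)⟩

lemma IsRoot.simpleReflection_nonneg (hQ : IsFiniteType Q) {β : V → ℤ} (hβ : IsRoot Q β)
    (hnonneg : 0 ≤ β) {i : V} (hne : β ≠ simpleRoot i) :
    0 ≤ simpleReflection Q i β := by
  refine ((hβ.map_simpleReflection i).nonneg_or_nonpos hQ).resolve_right fun hneg => hne ?_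
  have hmul : β = β i • simpleRoot i := by
    ext t
    obtain rfl | ht := eq_or_ne t i
    · simp
    · have hle := hneg t
      rw [simpleReflection_apply] at hle
      simp only [Pi.sub_apply, Pi.smul_apply, simpleRoot, Pi.single_eq_of_ne ht, smul_zero,
        sub_zero, Pi.zero_apply] at hle ⊢
      exact le_antisymm hle (hnonneg t)
  have hsq : β i * β i = 1 := by
    have h : titsForm Q β β = 2 := hβ
    rw [hmul] at h
    simp only [map_smul, LinearMap.smul_apply, smul_eq_mul, titsForm_simpleRoot_self] at h
    linarith
  have hone : β i = 1 := by
    have h : 0 ≤ β i := hnonneg i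
    nlinarith
  rw [hmul, hone, one_smul]

lemma rootHeight_simpleReflection (i : V) (v : V → ℤ) :
    rootHeight (simpleReflection Q i v) = rootHeight v - titsForm Q v (simpleRoot i) := by
  rw [simpleReflection_apply, rootHeight_sub]
  simp [rootHeight, ← Finset.mul_sum]

lemma IsRoot.exists_titsForm_simpleRoot_eq_one (hQ : IsFiniteType Q) {β : V → ℤ}
    (hβ : IsRoot Q β) (hnonneg : 0 ≤ β) (hne : ∀ k, β ≠ simpleRoot k) :
    ∃ k, titsForm Q β (simpleRoot k) = 1 := by
  by_contra! h
  have hle (k : V) : titsForm Q β (simpleRoot k) ≤ 0 :=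
    hβ.titsForm_nonpos_of_ne hQ (isRoot_simpleRoot k) (hne k) (h k)
  have hβ' : titsForm Q β β = 2 := hβ
  have hsum : titsForm Q β β ≤ 0 := by
    rw [titsForm_eq_sum]
    exact Finset.sum_nonpos fun i _ => mul_nonpos_of_nonneg_of_nonpos (hnonneg i) (hle i)
  omega

lemma IsRoot.simpleReflection_simpleReflection_nonneg (hQ : IsFiniteType Q) {β : V → ℤ}
    (hβ : IsRoot Q β) (hnonneg : 0 ≤ β) {i k : V} (hadj : Q.Adj k i) (hsimple : β ≠ simpleRoot k)
    (hk : titsForm Q β (simpleRoot k) = 1) (hi : titsForm Q β (simpleRoot i) ≤ 0) :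
    0 ≤ simpleReflection Q i (simpleReflection Q k β) ∧
      rootHeight (simpleReflection Q i (simpleReflection Q k β)) < rootHeight β := by
  have hB : titsForm Q (simpleReflection Q k β) (simpleRoot i)
      = titsForm Q β (simpleRoot i) + 1 := by
    rw [← titsForm_simpleReflection k, simpleReflection_simpleReflection,
      simpleReflection_simpleRoot_of_adj hadj, map_add, hk]
  have hne : simpleReflection Q k β ≠ simpleRoot i := by
    intro h
    rw [h, titsForm_simpleRoot_self] at hB
    omega
  refine ⟨(hβ.map_simpleReflection k).simpleReflection_nonneg hQ
    (hβ.simpleReflection_nonneg hQ hnonneg hsimple) hne, ?_⟩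
  have hβi : titsForm Q β (simpleRoot i) ≠ -2 := by
    intro h
    have heq : -β = simpleRoot i :=
      hβ.neg.eq_of_titsForm_eq_two hQ (isRoot_simpleRoot i) (by simp [h])
    refine hβ.not_nonpos_of_nonneg hnonneg ?_
    rw [← neg_nonneg, heq]
    exact simpleRoot_nonneg i
  have hlow := hβ.neg_two_le_titsForm hQ (isRoot_simpleRoot i)
  rw [rootHeight_simpleReflection, rootHeight_simpleReflection, hB, hk]
  omega

end FiniteType

section TitsWordTheorem

theorem exists_braidEquiv_concat (hQ : IsFiniteType Q) {x : List V} (hx : ¬ IsReducibleWord Q x)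
    {j : V} (hneg : act[Q] x (simpleRoot j) ≤ 0) : ∃ y, BraidEquiv Q x (y ++ [j]) := by
  induction hlen : x.length using Nat.strong_induction_on generalizing x j with
  | _ k ih =>
  obtain rfl | ⟨y, i, rfl⟩ := x.eq_nil_or_concat'
  · exact absurd hneg ((isRoot_simpleRoot (Q := Q) j).not_nonpos_of_nonneg (simpleRoot_nonneg j))
  have hylen : y.length < k := by simp [← hlen]
  have hy : ¬ IsReducibleWord Q y := fun h => hx (h.append_right [i])
  obtain rfl | hij := eq_or_ne i j
  · exact ⟨y, .refl⟩
  rw [act_append_apply] at hneg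
  by_cases hadj : Q.Adj i j
  · have hpos : 0 ≤ act[Q] y (simpleRoot i) := by
      refine (((isRoot_simpleRoot i).act y).nonneg_or_nonpos hQ).resolve_right fun h => hx ?_
      obtain ⟨u, hu⟩ := ih _ hylen hy h rfl
      exact ⟨u, i, [], by simpa using hu.append_right [i]⟩
    rw [simpleReflection_simpleRoot_of_adj hadj, map_add] at hneg
    obtain ⟨u, hyu⟩ := ih _ hylen hy ((le_add_of_nonneg_right hpos).trans hneg) rfl
    have hu : ¬ IsReducibleWord Q u := fun h => hy ((h.append_right [j]).of_braidEquiv hyu)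
    have huneg : act[Q] u (simpleRoot i) ≤ 0 := by
      rwa [act_simpleRoot_of_braidEquiv_concat hyu hadj.symm]
    obtain ⟨w, huw⟩ := ih _ (hyu.length_lt.trans hylen) hu huneg rfl
    have hyw : BraidEquiv Q (y ++ [i]) (w ++ [i, j, i]) :=
      (hyu.append_right [i]).trans (by simpa using huw.append_right [j, i])
    exact ⟨w ++ [j, i], hyw.tail (by simpa using BraidMove.braid w [] hadj)⟩
  · rw [simpleReflection_simpleRoot_of_not_adj hij hadj] at hneg
    obtain ⟨u, hyu⟩ := ih _ hylen hy hneg rfl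
    refine ⟨u ++ [i], (hyu.append_right [i]).tail ?_⟩
    simpa using BraidMove.comm u [] hij.symm (hadj ∘ .symm)

lemma isReducibleWord_concat_of_act_nonpos (hQ : IsFiniteType Q) {x : List V} {j : V}
    (hneg : act[Q] x (simpleRoot j) ≤ 0) : IsReducibleWord Q (x ++ [j]) := by
  by_cases hx : IsReducibleWord Q x
  · exact hx.append_right [j]
  · obtain ⟨y, hy⟩ := exists_braidEquiv_concat hQ hx hneg
    exact ⟨y, j, [], by simpa using hy.append_right [j]⟩

lemma act_concat_simpleRoot_eq_simpleRoot (hQ : IsFiniteType Q) {x : List V} {t i j : V}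
    (hx : ¬ IsReducibleWord Q (x ++ [t]))
    (hij : act[Q] (x ++ [t]) (simpleRoot i) = simpleRoot j) :
    (t ≠ i ∧ ¬ Q.Adj t i ∧ act[Q] x (simpleRoot i) = simpleRoot j) ∨
      (Q.Adj t i ∧ ∃ y, BraidEquiv Q x (y ++ [i]) ∧ act[Q] y (simpleRoot t) = simpleRoot j) := by
  have hroot (k : V) : IsRoot Q (act[Q] x (simpleRoot k)) := (isRoot_simpleRoot k).act x
  have hpos : 0 ≤ act[Q] x (simpleRoot t) :=
    ((hroot t).nonneg_or_nonpos hQ).resolve_right fun h =>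
      hx (isReducibleWord_concat_of_act_nonpos hQ h)
  rw [act_append_apply] at hij
  have hti : t ≠ i := by
    rintro rfl
    rw [simpleReflection_simpleRoot_self, map_neg, neg_eq_iff_eq_neg] at hij
    rw [hij, Left.nonneg_neg_iff] at hpos
    exact (isRoot_simpleRoot (Q := Q) j).not_nonpos_of_nonneg (simpleRoot_nonneg j) hpos
  by_cases hadj : Q.Adj t i
  · rw [simpleReflection_simpleRoot_of_adj hadj, map_add] at hij
    have hneg : act[Q] x (simpleRoot i) ≤ 0 := by
      refine ((hroot i).nonneg_or_nonpos hQ).resolve_left fun h => ?_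
      have hi := rootHeight_pos h (hroot i).ne_zero
      have ht := rootHeight_pos hpos (hroot t).ne_zero
      have hsum := congrArg rootHeight hij
      rw [rootHeight_add, rootHeight_simpleRoot] at hsum
      omega
    obtain ⟨y, hxy⟩ := exists_braidEquiv_concat hQ (fun h => hx (h.append_right [t])) hneg
    exact .inr ⟨hadj, y, hxy, by rwa [act_simpleRoot_of_braidEquiv_concat hxy hadj.symm]⟩
  · rw [simpleReflection_simpleRoot_of_not_adj hti hadj] at hij
    exact .inl ⟨hti, hadj, hij⟩

/-- The roots attached to the letters of a word: for a reduced word these are the positive roots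
made negative by the inverse of the corresponding Weyl group element. -/
noncomputable def inversionRoots (Q : SimpleGraph V) : List V → List (V → ℤ)
  | [] => []
  | i :: x => simpleRoot i :: (inversionRoots Q x).map (simpleReflection Q i)

lemma length_inversionRoots (x : List V) : (inversionRoots Q x).length = x.length := by
  induction x with
  | nil => rfl
  | cons i x ih => simp [inversionRoots, ih]

lemma exists_act_eq_of_mem_inversionRoots {x : List V} {β : V → ℤ} (hβ : β ∈ inversionRoots Q x) :
    ∃ y t z, x = y ++ t :: z ∧ act[Q] y (simpleRoot t) = β := by
  induction x generalizing β with
  | nil => simp [inversionRoots] at hβ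
  | cons i x ih =>
    obtain rfl | ⟨γ, hγ, rfl⟩ := by simpa [inversionRoots] using hβ
    · exact ⟨[], i, x, rfl, rfl⟩
    · obtain ⟨y, t, z, rfl, rfl⟩ := ih hγ
      exact ⟨i :: y, t, z, rfl, by simp⟩

lemma nodup_inversionRoots (hQ : IsFiniteType Q) {x : List V} (hx : ¬ IsReducibleWord Q x) :
    (inversionRoots Q x).Nodup := by
  induction x with
  | nil => exact List.nodup_nil
  | cons i x ih =>
    have hx' : ¬ IsReducibleWord Q x := fun h => hx (by simpa using h.append_append [i] [])
    have hinj : Function.Injective (simpleReflection Q i) :=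
      Function.LeftInverse.injective (simpleReflection_simpleReflection i)
    refine List.nodup_cons.2 ⟨fun hmem => hx' ?_, (ih hx').map hinj⟩
    obtain ⟨γ, hγ, hγi⟩ := List.mem_map.1 hmem
    obtain ⟨y, t, z, rfl, rfl⟩ := exists_act_eq_of_mem_inversionRoots hγ
    have hneg : act[Q] y (simpleRoot t) ≤ 0 := by
      rw [← simpleReflection_simpleReflection (Q := Q) i (act[Q] y _), hγi,
        simpleReflection_simpleRoot_self]
      exact neg_nonpos.2 (simpleRoot_nonneg i)
    simpa using (isReducibleWord_concat_of_act_nonpos hQ hneg).append_right z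

theorem IsFiniteType.exists_forall_isReducibleWord (hQ : IsFiniteType Q) :
    ∃ N, ∀ x : List V, N < x.length → IsReducibleWord Q x := by
  refine ⟨hQ.finite_setOf_isRoot.toFinset.card, fun x hlen => ?_⟩
  by_contra hx
  have hsub : (inversionRoots Q x).toFinset ⊆ hQ.finite_setOf_isRoot.toFinset := by
    intro β hβ
    obtain ⟨y, t, z, -, rfl⟩ := exists_act_eq_of_mem_inversionRoots (List.mem_toFinset.1 hβ)
    exact hQ.finite_setOf_isRoot.mem_toFinset.2 ((isRoot_simpleRoot t).act y)
  have hcard := Finset.card_le_card hsub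
  rw [List.toFinset_card_of_nodup (nodup_inversionRoots hQ hx), length_inversionRoots] at hcard
  omega

theorem IsFiniteType.finite_range_wordProd (hQ : IsFiniteType Q) {M : Type*} [Monoid M]
    {s : V → M} (hs : ∀ i, s i * s i = 1)
    (hcomm : ∀ i j, i ≠ j → ¬ Q.Adj i j → s i * s j = s j * s i)
    (hbraid : ∀ i j, Q.Adj i j → s i * s j * s i = s j * s i * s j) :
    (Set.range (wordProd s)).Finite := by
  obtain ⟨N, hN⟩ := hQ.exists_forall_isReducibleWord
  refine ((List.finite_length_le V N).image (wordProd s)).subset ?_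
  rintro _ ⟨x, rfl⟩
  induction hlen : x.length using Nat.strong_induction_on generalizing x with
  | _ k ih =>
  obtain hx | hx := le_or_gt x.length N
  · exact ⟨x, hx, rfl⟩
  obtain ⟨a, i, b, hab⟩ := hN x hx
  rw [wordProd_eq_of_braidEquiv hcomm hbraid hab, wordProd_deleteSquare hs]
  refine ih _ ?_ (a ++ b) rfl
  rw [← hlen, hab.length_eq]
  simp

end TitsWordTheorem

/-! ### Finite groups generated by involutions -/

section FiniteGroups

variable {G : Type*} [Group G]

open scoped IsMulCommutative in
lemma finite_closure_of_commute_of_mul_self {S : Set G} (hS : S.Finite)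
    (hsq : ∀ x ∈ S, x * x = 1) (hcomm : ∀ x ∈ S, ∀ y ∈ S, x * y = y * x) :
    Finite (Subgroup.closure S) := by
  have := Subgroup.isMulCommutative_closure hcomm
  have hfg : Group.FG (Subgroup.closure S) := by
    have := hS.to_subtype
    exact Group.closure_finite_fg S
  have htorsion : CommGroup.torsion (Subgroup.closure S) = ⊤ := by
    rw [eq_top_iff, ← Subgroup.closure_closure_coe_preimage, Subgroup.closure_le]
    intro x hx
    exact isOfFinOrder_iff_pow_eq_one.2 ⟨2, two_pos, Subtype.ext (by simpa [sq] using hsq x hx)⟩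
  exact CommGroup.finite_of_fg_isMulTorsion _ fun x =>
    (htorsion ▸ Subgroup.mem_top x : x ∈ CommGroup.torsion _)

lemma finite_sup_closure_of_commute_conj {H : Subgroup G} (hH : (H : Set G).Finite) {S : Set G}
    (hS : S.Finite) (hsq : ∀ x ∈ S, x * x = 1)
    (hcomm : ∀ g ∈ H, ∀ x ∈ S, ∀ y ∈ S, Commute (g * x * g⁻¹) y) :
    Finite (H ⊔ Subgroup.closure S : Subgroup G) := by
  let T : Set G := Set.image2 (fun g x => g * x * g⁻¹) H S
  have hTfin : Finite (Subgroup.closure T) := by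
    refine finite_closure_of_commute_of_mul_self (hH.image2 _ hS) ?_ ?_
    · rintro _ ⟨g, -, x, hx, rfl⟩
      simp [hsq x hx]
    · rintro _ ⟨g, hg, x, hx, rfl⟩ _ ⟨h, hh, y, hy, rfl⟩
      have hcomm' := hcomm (h⁻¹ * g) (mul_mem (inv_mem hh) hg) x hx y hy
      rw [← Commute.conj_iff h] at hcomm'
      simpa [mul_assoc] using hcomm'.eq
  have hnorm : H ≤ Subgroup.normalizer (Subgroup.closure T : Set G) := by
    refine Subgroup.le_normalizer_closure_iff.2 fun h hh => ?_
    rintro _ ⟨g, hg, x, hx, rfl⟩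
    exact Subgroup.subset_closure ⟨h * g, mul_mem hh hg, x, hx, by simp [mul_assoc]⟩
  have hsup : ((H ⊔ Subgroup.closure T : Subgroup G) : Set G).Finite := by
    rw [Subgroup.coe_mul_of_left_le_normalizer_right _ _ hnorm]
    exact hH.mul (Set.toFinite _)
  have hST : S ⊆ T := fun x hx => ⟨1, one_mem H, x, hx, by simp⟩
  exact (hsup.subset (sup_le_sup_left (Subgroup.closure_mono hST) H)).to_subtype

end FiniteGroups

/-! ### The Brauer relations at infinite parameter -/

/-- The relations satisfied by the generators `s i` and `ε i = δ⁻¹ e i` of the simply-laced Brauer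
algebra of `Q` in the limit `δ → ∞`. -/
structure LimitBrauerRel (Q : SimpleGraph V) {R : Type*} [MonoidWithZero R] (s ε : V → R) :
    Prop where
  s_mul_s (i : V) : s i * s i = 1
  s_mul_ε (i : V) : s i * ε i = ε i
  ε_mul_s (i : V) : ε i * s i = ε i
  ε_mul_ε (i : V) : ε i * ε i = ε i
  s_comm (i j : V) : i ≠ j → ¬ Q.Adj i j → s i * s j = s j * s i
  s_comm_ε (i j : V) : i ≠ j → ¬ Q.Adj i j → s i * ε j = ε j * s i
  ε_comm (i j : V) : i ≠ j → ¬ Q.Adj i j → ε i * ε j = ε j * ε i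
  braid (i j : V) : Q.Adj i j → s i * s j * s i = s j * s i * s j
  s_mul_s_mul_ε (i j : V) : Q.Adj i j → s i * s j * ε i = ε j * s i * s j
  ε_mul_ε_of_adj (i j : V) : Q.Adj i j → ε i * ε j = 0

namespace LimitBrauerRel

section RootIdempotents

variable {R : Type*} [MonoidWithZero R] {s ε : V → R}

theorem wordProd_mul_ε (hsε : LimitBrauerRel Q s ε) (hQ : IsFiniteType Q) {x : List V} {i j : V}
    (hx : act[Q] x (simpleRoot i) = simpleRoot j) : wordProd s x * ε i = ε j * wordProd s x := by
  induction hlen : x.length using Nat.strong_induction_on generalizing x i j with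
  | _ k ih =>
  by_cases hred : IsReducibleWord Q x
  · obtain ⟨a, c, b, hab⟩ := hred
    have hlt : (a ++ b).length < k := by
      rw [← hlen, hab.length_eq]
      simp
    rw [wordProd_eq_of_braidEquiv hsε.s_comm hsε.braid hab, wordProd_deleteSquare hsε.s_mul_s]
    refine ih _ hlt ?_ rfl
    rw [← hx, act_eq_of_braidEquiv hab, wordProd_deleteSquare simpleReflection_mul_self]
  obtain rfl | ⟨y, t, rfl⟩ := x.eq_nil_or_concat'
  · obtain rfl : i = j := by simpa [Pi.single_apply] using congrFun hx i
    simp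
  have hylen : y.length < k := by simp [← hlen]
  obtain ⟨hti, hadj, hy⟩ | ⟨hadj, u, hyu, hu⟩ := act_concat_simpleRoot_eq_simpleRoot hQ hred hx
  · rw [wordProd_append, mul_assoc, wordProd_cons, wordProd_nil, mul_one,
      hsε.s_comm_ε t i hti hadj, ← mul_assoc, ih _ hylen hy rfl, mul_assoc]
  · rw [wordProd_append, wordProd_eq_of_braidEquiv hsε.s_comm hsε.braid hyu, wordProd_append]
    simp only [wordProd_cons, wordProd_nil, mul_one]
    calc wordProd s u * s i * s t * ε i
        = wordProd s u * (s i * s t * ε i) := by simp only [mul_assoc]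
      _ = wordProd s u * ε t * (s i * s t) := by
          rw [hsε.s_mul_s_mul_ε i t hadj.symm]; simp only [mul_assoc]
      _ = ε j * (wordProd s u * s i * s t) := by
          rw [ih _ (hyu.length_lt.trans hylen) hu rfl]; simp only [mul_assoc]

/-- `a` is a conjugate of some `ε j` by a word carrying the simple root `j` to `β`. -/
def IsRootIdempotent (Q : SimpleGraph V) (s ε : V → R) (β : V → ℤ) (a : R) : Prop :=
  ∃ x j, act[Q] x (simpleRoot j) = β ∧ a = wordProd s x * ε j * wordProd s x.reverse

variable {β γ : V → ℤ} {a : R}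

lemma isRootIdempotent_ε (i : V) : IsRootIdempotent Q s ε (simpleRoot i) (ε i) :=
  ⟨[], i, rfl, by simp⟩

lemma IsRootIdempotent.conj (ha : IsRootIdempotent Q s ε β a) (y : List V) :
    IsRootIdempotent Q s ε (act[Q] y β) (wordProd s y * a * wordProd s y.reverse) := by
  obtain ⟨x, j, rfl, rfl⟩ := ha
  exact ⟨y ++ x, j, by simp, by simp only [wordProd_append, List.reverse_append, mul_assoc]⟩

lemma IsRootIdempotent.neg (hsε : LimitBrauerRel Q s ε) (ha : IsRootIdempotent Q s ε β a) :
    IsRootIdempotent Q s ε (-β) a := by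
  obtain ⟨x, j, rfl, rfl⟩ := ha
  refine ⟨x ++ [j], j, by rw [act_append_apply, simpleReflection_simpleRoot_self, map_neg], ?_⟩
  calc wordProd s x * ε j * wordProd s x.reverse
      = wordProd s x * (s j * ε j * s j) * wordProd s x.reverse := by
        rw [hsε.s_mul_ε, hsε.ε_mul_s]
    _ = wordProd s (x ++ [j]) * ε j * wordProd s (x ++ [j]).reverse := by simp [mul_assoc]

lemma IsRootIdempotent.eq_ε (hsε : LimitBrauerRel Q s ε) (hQ : IsFiniteType Q) {i : V}
    (ha : IsRootIdempotent Q s ε (simpleRoot i) a) : a = ε i := by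
  obtain ⟨x, j, hx, rfl⟩ := ha
  rw [hsε.wordProd_mul_ε hQ hx, mul_assoc, wordProd_mul_reverse hsε.s_mul_s, mul_one]

/-- All idempotents attached to `β` commute with all those attached to `γ`. -/
def RootIdempotentsCommute (Q : SimpleGraph V) (s ε : V → R) (β γ : V → ℤ) : Prop :=
  ∀ a b, IsRootIdempotent Q s ε β a → IsRootIdempotent Q s ε γ b → Commute a b

lemma RootIdempotentsCommute.of_simpleReflection (hsε : LimitBrauerRel Q s ε) (i : V)
    (h : RootIdempotentsCommute Q s ε (simpleReflection Q i β) (simpleReflection Q i γ)) :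
    RootIdempotentsCommute Q s ε β γ := by
  intro a b ha hb
  have hconj : Commute (s i * a * s i) (s i * b * s i) :=
    h _ _ (by simpa using ha.conj [i]) (by simpa using hb.conj [i])
  have hmul (c d : R) : s i * c * s i * (s i * d * s i) = s i * (c * d) * s i := by
    rw [← mul_assoc, ← mul_assoc, mul_assoc (s i * c), hsε.s_mul_s]
    simp only [mul_one, mul_assoc]
  have hunit : IsUnit (s i) := ⟨⟨s i, s i, hsε.s_mul_s i, hsε.s_mul_s i⟩, rfl⟩
  refine hunit.mul_left_cancel (hunit.mul_right_cancel ?_)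
  rw [← hmul, ← hmul, hconj.eq]

lemma RootIdempotentsCommute.of_neg_right (hsε : LimitBrauerRel Q s ε)
    (h : RootIdempotentsCommute Q s ε β (-γ)) : RootIdempotentsCommute Q s ε β γ :=
  fun a b ha hb => h a b ha (hb.neg hsε)

lemma RootIdempotentsCommute.of_neg_left (hsε : LimitBrauerRel Q s ε)
    (h : RootIdempotentsCommute Q s ε (-β) γ) : RootIdempotentsCommute Q s ε β γ :=
  fun a b ha hb => h a b (ha.neg hsε) hb

lemma rootIdempotentsCommute_simpleRoot_simpleRoot (hsε : LimitBrauerRel Q s ε)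
    (hQ : IsFiniteType Q) (i j : V) :
    RootIdempotentsCommute Q s ε (simpleRoot i) (simpleRoot j) := by
  intro a b ha hb
  rw [ha.eq_ε hsε hQ, hb.eq_ε hsε hQ]
  obtain rfl | hij := eq_or_ne i j
  · exact Commute.refl _
  by_cases hadj : Q.Adj i j
  · rw [Commute, SemiconjBy, hsε.ε_mul_ε_of_adj i j hadj, hsε.ε_mul_ε_of_adj j i hadj.symm]
  · exact hsε.ε_comm i j hij hadj

lemma rootIdempotentsCommute_simpleRoot_of_nonneg (hsε : LimitBrauerRel Q s ε)
    (hQ : IsFiniteType Q) (hβ : IsRoot Q β) (hnonneg : 0 ≤ β) (i : V) :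
    RootIdempotentsCommute Q s ε β (simpleRoot i) := by
  induction hh : (rootHeight β).toNat using Nat.strong_induction_on generalizing β i with
  | _ h ih =>
  by_cases hsimple : ∃ k, β = simpleRoot k
  · obtain ⟨k, rfl⟩ := hsimple
    exact rootIdempotentsCommute_simpleRoot_simpleRoot hsε hQ k i
  push Not at hsimple
  have descend {γ : V → ℤ} (hγ : IsRoot Q γ) (hγ0 : 0 ≤ γ) (hlt : rootHeight γ < rootHeight β)
      (j : V) : RootIdempotentsCommute Q s ε γ (simpleRoot j) := by
    have hγh := rootHeight_nonneg hγ0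
    exact ih _ (by omega) hγ hγ0 j rfl
  have descend_simpleReflection {k : V} (hk : titsForm Q β (simpleRoot k) = 1) (j : V) :
      RootIdempotentsCommute Q s ε (simpleReflection Q k β) (simpleRoot j) := by
    refine descend (hβ.map_simpleReflection k) (hβ.simpleReflection_nonneg hQ hnonneg (hsimple k))
      ?_ j
    rw [rootHeight_simpleReflection, hk]
    exact sub_one_lt _
  by_cases hi : titsForm Q β (simpleRoot i) = 1
  · refine .of_simpleReflection hsε i ?_
    rw [simpleReflection_simpleRoot_self]
    exact .of_neg_right hsε (by simpa using descend_simpleReflection hi i)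
  obtain ⟨k, hk⟩ := hβ.exists_titsForm_simpleRoot_eq_one hQ hnonneg hsimple
  refine .of_simpleReflection hsε k ?_
  have hki : k ≠ i := by rintro rfl; exact hi hk
  by_cases hadj : Q.Adj k i
  · obtain ⟨hnonneg', hlt⟩ := hβ.simpleReflection_simpleReflection_nonneg hQ hnonneg hadj
      (hsimple k) hk (hβ.titsForm_nonpos_of_ne hQ (isRoot_simpleRoot i) (hsimple i) hi)
    refine .of_simpleReflection hsε i ?_
    rw [simpleReflection_simpleRoot_of_adj hadj, map_add, simpleReflection_simpleRoot_self,
      simpleReflection_simpleRoot_of_adj hadj.symm, neg_add_cancel_comm_assoc]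
    exact descend ((hβ.map_simpleReflection k).map_simpleReflection i) hnonneg' hlt k
  · rw [simpleReflection_simpleRoot_of_not_adj hki hadj]
    exact descend_simpleReflection hk i

theorem rootIdempotentsCommute (hsε : LimitBrauerRel Q s ε) (hQ : IsFiniteType Q)
    (hβ : IsRoot Q β) (x : List V) (j : V) :
    RootIdempotentsCommute Q s ε β (act[Q] x (simpleRoot j)) := by
  induction x generalizing β with
  | nil =>
    rcases hβ.nonneg_or_nonpos hQ with hnonneg | hnonpos
    · exact rootIdempotentsCommute_simpleRoot_of_nonneg hsε hQ hβ hnonneg j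
    · exact .of_neg_left hsε
        (rootIdempotentsCommute_simpleRoot_of_nonneg hsε hQ hβ.neg (neg_nonneg.2 hnonpos) j)
  | cons i x ih =>
    refine .of_simpleReflection hsε i ?_
    rw [wordProd_cons, Module.End.mul_apply, simpleReflection_simpleReflection]
    exact ih (hβ.map_simpleReflection i)

end RootIdempotents

section Semisimplicity

variable {R : Type*} [Ring R] {s ε : V → R}

lemma commute_conj_one_sub_two_mul_ε (hsε : LimitBrauerRel Q s ε) (hQ : IsFiniteType Q)
    (x : List V) (i j : V) :
    Commute (wordProd s x * (1 - 2 * ε i) * wordProd s x.reverse) (1 - 2 * ε j) := by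
  have hcomm : Commute (wordProd s x * ε i * wordProd s x.reverse) (ε j) :=
    hsε.rootIdempotentsCommute hQ ((isRoot_simpleRoot i).act x) [] j _ _ ⟨x, i, rfl, rfl⟩
      (isRootIdempotent_ε j)
  have hconj : wordProd s x * (1 - 2 * ε i) * wordProd s x.reverse
      = 1 - 2 * (wordProd s x * ε i * wordProd s x.reverse) := by
    simp only [mul_sub, sub_mul, mul_one, wordProd_mul_reverse hsε.s_mul_s, two_mul, mul_add,
      add_mul]
  rw [hconj]
  simp only [two_mul]
  exact (Commute.one_left _).sub_left
    ((Commute.one_right _).sub_right ((hcomm.add_left hcomm).add_right (hcomm.add_left hcomm)))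

theorem exists_finite_subgroup (hsε : LimitBrauerRel Q s ε) (hQ : IsFiniteType Q) :
    ∃ Γ : Subgroup Rˣ, Finite Γ ∧ (∀ i, ∃ u ∈ Γ, (u : R) = s i) ∧
      ∀ i, ∃ u ∈ Γ, (u : R) = 1 - 2 * ε i := by
  have hinv (i : V) : (1 - 2 * ε i) * (1 - 2 * ε i) = 1 := by
    simp only [mul_sub, sub_mul, two_mul, add_mul, mul_add, hsε.ε_mul_ε i, one_mul, mul_one]
    abel
  let u (i : V) : Rˣ := ⟨s i, s i, hsε.s_mul_s i, hsε.s_mul_s i⟩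
  let t (i : V) : Rˣ := ⟨1 - 2 * ε i, 1 - 2 * ε i, hinv i, hinv i⟩
  have hu (i : V) : u i * u i = 1 := Units.ext (hsε.s_mul_s i)
  have hval (x : List V) : ((wordProd u x : Rˣ) : R) = wordProd s x :=
    map_wordProd (Units.coeHom R) x
  have hW : (Subgroup.closure (Set.range u) : Set Rˣ).Finite := by
    refine (hQ.finite_range_wordProd hu (fun i j hne hadj => Units.ext (hsε.s_comm i j hne hadj))
      fun i j hadj => Units.ext (hsε.braid i j hadj)).subset fun w hw => ?_
    exact exists_wordProd_eq_of_mem_closure hu hw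
  have hΓ := finite_sup_closure_of_commute_conj hW (Set.finite_range t) ?_ ?_
  · exact ⟨_, hΓ,
      fun i => ⟨u i, Subgroup.mem_sup_left (Subgroup.subset_closure ⟨i, rfl⟩), rfl⟩,
      fun i => ⟨t i, Subgroup.mem_sup_right (Subgroup.subset_closure ⟨i, rfl⟩), rfl⟩⟩
  · rintro _ ⟨i, rfl⟩
    exact Units.ext (hinv i)
  · rintro w hw _ ⟨i, rfl⟩ _ ⟨j, rfl⟩
    obtain ⟨x, rfl⟩ := exists_wordProd_eq_of_mem_closure hu hw
    rw [inv_eq_of_mul_eq_one_right (wordProd_mul_reverse hu x)]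
    refine Commute.units_of_val ?_
    simpa only [Units.val_mul, hval] using hsε.commute_conj_one_sub_two_mul_ε hQ x i j

theorem isSemisimpleRing {κ : Type*} [Field κ] [CharZero κ] [Algebra κ R]
    (hsε : LimitBrauerRel Q s ε) (hQ : IsFiniteType Q)
    (hgen : Algebra.adjoin κ (Set.range s ∪ Set.range ε) = ⊤) : IsSemisimpleRing R := by
  obtain ⟨Γ, hfin, hs, hε⟩ := hsε.exists_finite_subgroup hQ
  have : NeZero (Nat.card Γ : κ) := ⟨Nat.cast_ne_zero.2 Nat.card_pos.ne'⟩
  let f : MonoidAlgebra κ Γ →ₐ[κ] R :=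
    MonoidAlgebra.lift κ R Γ ((Units.coeHom R).comp Γ.subtype)
  have hΓ {u : Rˣ} (hu : u ∈ Γ) : (u : R) ∈ f.range := ⟨MonoidAlgebra.of κ Γ ⟨u, hu⟩, by simp [f]⟩
  have hsurj : f.range = ⊤ := by
    rw [eq_top_iff, ← hgen]
    refine Algebra.adjoin_le ?_
    rintro _ (⟨i, rfl⟩ | ⟨i, rfl⟩)
    · obtain ⟨u, hu, hui⟩ := hs i
      exact hui ▸ hΓ hu
    · obtain ⟨u, hu, hui⟩ := hε i
      have hεi : ε i = (1 / 2 : κ) • (1 - (u : R)) := by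
        rw [hui, sub_sub_cancel, two_mul, ← two_smul κ, smul_smul]
        norm_num
      exact hεi ▸ f.range.smul_mem (sub_mem (one_mem _) (hΓ hu)) _
  exact RingHom.isSemisimpleRing_of_surjective f.toRingHom (AlgHom.range_eq_top f |>.1 hsurj)

end Semisimplicity

end LimitBrauerRel

end Roots

/-! ### Finiteness of an algebra satisfying deformed Coxeter relations -/

section CoxeterSpans

variable {V : Type*} {O A : Type*} [CommRing O] [Ring A] [Algebra O A]

lemma mul_ideal_smul_le (I : Ideal O) (X Y : Submodule O A) : X * (I • Y) ≤ I • (X * Y) := by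
  refine Submodule.mul_le.2 fun a ha b hb => ?_
  induction hb using Submodule.smul_induction_on' with
  | smul r hr y hy =>
    rw [mul_smul_comm]
    exact Submodule.smul_mem_smul hr (Submodule.mul_mem_mul ha hy)
  | add x _ y _ hx hy => rw [mul_add]; exact add_mem hx hy

lemma ideal_smul_mul_le (I : Ideal O) (X Y : Submodule O A) : (I • X) * Y ≤ I • (X * Y) := by
  refine Submodule.mul_le.2 fun a ha b hb => ?_
  induction ha using Submodule.smul_induction_on' with
  | smul r hr x hx =>
    rw [smul_mul_assoc]
    exact Submodule.smul_mem_smul hr (Submodule.mul_mem_mul hx hb)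
  | add x _ y _ hx hy => rw [add_mul]; exact add_mem hx hy

lemma smul_mul_mul_mem_smul_pow {I : Ideal O} {X : Submodule O A} {r : O} {a b c : A} (hr : r ∈ I)
    (ha : a ∈ X) (hb : b ∈ X) (hc : c ∈ X) : r • (a * b * c) ∈ I • X ^ 3 := by
  rw [pow_succ, sq]
  exact Submodule.smul_mem_smul hr (Submodule.mul_mem_mul (Submodule.mul_mem_mul ha hb) hc)

lemma finite_adjoin_of_pow_succ_le {F : Submodule O A} (hF : F.FG) (hone : 1 ≤ F) {N : ℕ}
    (hN : F ^ (N + 1) ≤ F ^ N) : Module.Finite O (Algebra.adjoin O (F : Set A)) := by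
  have hpow (k : ℕ) : F ^ k ≤ F ^ N := by
    refine (le_total k N).elim (pow_le_pow_right' hone) fun hk => ?_
    induction k, hk using Nat.le_induction with
    | base => exact le_rfl
    | succ k _ ih => exact (pow_succ F k ▸ mul_le_mul' ih le_rfl).trans (pow_succ F N ▸ hN)
  let S : Subalgebra O A := (F ^ N).toSubalgebra (Submodule.one_le.1 (hpow 0)) fun x y hx hy =>
    hpow (N + N) (pow_add F N N ▸ Submodule.mul_mem_mul hx hy)
  have hle : F ≤ Subalgebra.toSubmodule (Algebra.adjoin O (F : Set A)) := Algebra.subset_adjoin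
  have heq : Subalgebra.toSubmodule (Algebra.adjoin O (F : Set A)) = F ^ N := by
    refine le_antisymm (Algebra.adjoin_le (S := S) (pow_one F ▸ hpow 1)) ?_
    refine (pow_le_pow_left' hle N).trans ?_
    rcases N.eq_zero_or_pos with rfl | hpos
    · exact (pow_zero _).trans_le (Submodule.one_le.2 (one_mem (Algebra.adjoin O (F : Set A))))
    · exact ((Subalgebra.isIdempotentElem_toSubmodule _).pow_eq hpos.ne').le
  exact Module.Finite.iff_fg.2 (heq ▸ hF.pow N)

/-- The span of `1` and of a family of submodules: the elements of word length at most one. -/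
def unitalSpan (W : V → Submodule O A) : Submodule O A := 1 ⊔ ⨆ i, W i

variable {W : V → Submodule O A}

lemma one_le_unitalSpan : 1 ≤ unitalSpan W := le_sup_left

lemma one_mem_unitalSpan : (1 : A) ∈ unitalSpan W := Submodule.one_le.1 one_le_unitalSpan

lemma le_unitalSpan (i : V) : W i ≤ unitalSpan W := le_sup_of_le_right (le_iSup W i)

lemma unitalSpan_fg [Finite V] (hW : ∀ i, (W i).FG) : (unitalSpan W).FG := by
  refine Submodule.FG.sup ?_ (Submodule.fg_iSup _ hW)
  rw [Submodule.one_eq_span]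
  exact Submodule.fg_span_singleton 1

lemma wordProd_le_unitalSpan_pow (x : List V) : wordProd W x ≤ unitalSpan W ^ x.length := by
  induction x with
  | nil => exact le_rfl
  | cons i x ih =>
    rw [wordProd_cons, List.length_cons, pow_succ']
    exact mul_le_mul' (le_unitalSpan i) ih

lemma unitalSpan_pow_succ_le {k : ℕ} {X : Submodule O A} (hX : unitalSpan W ^ k ≤ X)
    (hword : ∀ x : List V, x.length = k + 1 → wordProd W x ≤ X) :
    unitalSpan W ^ (k + 1) ≤ X := by
  have hprefix (j : ℕ) : ∀ x : List V, x.length + j = k + 1 →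
      wordProd W x * unitalSpan W ^ j ≤ X := by
    induction j with
    | zero => intro x hx; rw [pow_zero, mul_one]; exact hword x hx
    | succ j ih =>
      intro x hx
      rw [pow_succ', ← mul_assoc]
      conv_lhs => rw [unitalSpan, Submodule.mul_sup, Submodule.sup_mul, mul_one, Submodule.mul_iSup,
        Submodule.iSup_mul]
      refine sup_le ?_ (iSup_le fun i => ?_)
      · refine le_trans ?_ hX
        rw [show k = x.length + j by omega, pow_add]
        exact mul_le_mul' (wordProd_le_unitalSpan_pow x) le_rfl
      · have hxi := ih (x ++ [i]) (by rw [List.length_append, List.length_singleton]; omega)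
        rwa [wordProd_append, wordProd_cons, wordProd_nil, mul_one] at hxi
  simpa using hprefix (k + 1) [] (zero_add _)

variable {Q : SimpleGraph V} {I : Ideal O}

lemma wordProd_le_of_braidMove
    (hcomm : ∀ i j, i ≠ j → ¬ Q.Adj i j → W i * W j = W j * W i)
    (hbraid : ∀ i j, Q.Adj i j → W i * W j * W i ≤ W j * W i * W j ⊔ I • unitalSpan W ^ 3)
    {x y : List V} (h : BraidMove Q x y) :
    wordProd W x ≤ wordProd W y ⊔ I • unitalSpan W ^ x.length := by
  cases h with
  | @comm a b i j hne hadj =>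
    have hij : W i * (W j * wordProd W b) = W j * (W i * wordProd W b) := by
      rw [← mul_assoc, hcomm i j hne hadj, mul_assoc]
    simp only [wordProd_append, wordProd_cons, hij]
    exact le_sup_left
  | @braid a b i j hadj =>
    calc wordProd W (a ++ i :: j :: i :: b)
        = wordProd W a * (W i * W j * W i) * wordProd W b := by
          simp only [wordProd_append, wordProd_cons, mul_assoc]
      _ ≤ wordProd W a * (W j * W i * W j ⊔ I • unitalSpan W ^ 3) * wordProd W b := by
          gcongr; exact hbraid i j hadj
      _ = wordProd W (a ++ j :: i :: j :: b) ⊔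
            wordProd W a * (I • unitalSpan W ^ 3) * wordProd W b := by
          simp only [wordProd_append, wordProd_cons, Submodule.mul_sup, Submodule.sup_mul,
            mul_assoc]
      _ ≤ wordProd W (a ++ j :: i :: j :: b) ⊔
            I • (wordProd W a * unitalSpan W ^ 3 * wordProd W b) := by
          gcongr
          exact (mul_le_mul_left (mul_ideal_smul_le ..) _).trans (ideal_smul_mul_le ..)
      _ ≤ wordProd W (a ++ j :: i :: j :: b) ⊔
            I • unitalSpan W ^ (a ++ i :: j :: i :: b).length := by
          have hlen : (a ++ i :: j :: i :: b).length = a.length + 3 + b.length := by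
            simp only [List.length_append, List.length_cons]; omega
          rw [hlen, pow_add, pow_add]
          gcongr <;> exact wordProd_le_unitalSpan_pow _

lemma wordProd_le_of_braidEquiv
    (hcomm : ∀ i j, i ≠ j → ¬ Q.Adj i j → W i * W j = W j * W i)
    (hbraid : ∀ i j, Q.Adj i j → W i * W j * W i ≤ W j * W i * W j ⊔ I • unitalSpan W ^ 3)
    {x y : List V} (h : BraidEquiv Q x y) :
    wordProd W x ≤ wordProd W y ⊔ I • unitalSpan W ^ x.length := by
  induction h with
  | refl => exact le_sup_left
  | tail hxy hmove ih =>
    refine ih.trans (sup_le ?_ le_sup_right)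
    rw [BraidEquiv.length_eq hxy]
    exact wordProd_le_of_braidMove hcomm hbraid hmove

lemma IsReducibleWord.wordProd_le
    (hsq : ∀ i, W i * W i ≤ unitalSpan W)
    (hcomm : ∀ i j, i ≠ j → ¬ Q.Adj i j → W i * W j = W j * W i)
    (hbraid : ∀ i j, Q.Adj i j → W i * W j * W i ≤ W j * W i * W j ⊔ I • unitalSpan W ^ 3)
    {x : List V} (hx : IsReducibleWord Q x) {k : ℕ} (hk : x.length = k + 1) :
    wordProd W x ≤ unitalSpan W ^ k ⊔ I • unitalSpan W ^ (k + 1) := by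
  obtain ⟨a, i, b, hab⟩ := hx
  have hlen : k = a.length + 1 + b.length := by
    have := hab.length_eq
    simp only [List.length_append, List.length_cons] at this
    omega
  have hsquare : wordProd W (a ++ i :: i :: b) ≤ unitalSpan W ^ k := by
    rw [hlen, pow_add, pow_add, pow_one, wordProd_append, wordProd_cons, wordProd_cons,
      ← mul_assoc (W i), ← mul_assoc]
    gcongr
    exacts [wordProd_le_unitalSpan_pow a, hsq i, wordProd_le_unitalSpan_pow b]
  exact hk ▸ (wordProd_le_of_braidEquiv hcomm hbraid hab).trans (sup_le_sup_right hsquare _)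

theorem IsFiniteType.finite_adjoin_unitalSpan [Fintype V] [DecidableEq V] [IsLocalRing O]
    (hQ : IsFiniteType Q) (hW : ∀ i, (W i).FG) (hsq : ∀ i, W i * W i ≤ unitalSpan W)
    (hcomm : ∀ i j, i ≠ j → ¬ Q.Adj i j → W i * W j = W j * W i)
    (hbraid : ∀ i j, Q.Adj i j → W i * W j * W i ≤
      W j * W i * W j ⊔ IsLocalRing.maximalIdeal O • unitalSpan W ^ 3) :
    Module.Finite O (Algebra.adjoin O (unitalSpan W : Set A)) := by
  obtain ⟨N, hN⟩ := hQ.exists_forall_isReducibleWord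
  have hfg := unitalSpan_fg hW
  have hpow : unitalSpan W ^ (N + 1) ≤
      unitalSpan W ^ N ⊔ IsLocalRing.maximalIdeal O • unitalSpan W ^ (N + 1) :=
    unitalSpan_pow_succ_le le_sup_left fun x hx =>
      (hN x (by omega)).wordProd_le hsq hcomm hbraid hx
  refine finite_adjoin_of_pow_succ_le hfg one_le_unitalSpan (N := N) ?_
  exact Submodule.le_of_le_smul_of_le_jacobson_bot (hfg.pow _)
    (IsLocalRing.jacobson_eq_maximalIdeal ⊥ bot_ne_top).ge hpow

end CoxeterSpans

/-! ### The lattice spanned by words in `g i` and `δ⁻¹ e i` -/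

section BMWLatticeRel

variable {V : Type*} {Q : SimpleGraph V} {O A : Type*} [CommRing O] [Ring A] [Algebra O A]

/-- Relations between the generators `g i` and the rescaled generators `ε i = δ⁻¹ e i` of a BMW
algebra. The parameters are named after their role: `l' = l⁻¹`, `μ = m δ` and `d = δ⁻¹`; over a
local ring in which `m`, `μ` and `d` are not units they degenerate to `LimitBrauerRel`. The
combination `g i + m • 1 - μ • ε i` is the inverse of `g i`. -/
structure BMWLatticeRel (Q : SimpleGraph V) (l l' m μ d : O) (g ε : V → A) : Prop where
  g_mul_g (i : V) : g i * g i = 1 - m • g i + (μ * l') • ε i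
  g_mul_ε (i : V) : g i * ε i = l' • ε i
  ε_mul_g (i : V) : ε i * g i = l' • ε i
  ε_mul_ε (i : V) : ε i * ε i = ε i
  g_comm (i j : V) : i ≠ j → ¬ Q.Adj i j → g i * g j = g j * g i
  g_comm_ε (i j : V) : i ≠ j → ¬ Q.Adj i j → g i * ε j = ε j * g i
  ε_comm (i j : V) : i ≠ j → ¬ Q.Adj i j → ε i * ε j = ε j * ε i
  braid (i j : V) : Q.Adj i j → g i * g j * g i = g j * g i * g j
  g_mul_g_mul_ε (i j : V) : Q.Adj i j → g i * g j * ε i = ε j * g i * g j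
  g_mul_ε_mul_inv (i j : V) : Q.Adj i j →
    g i * ε j * (g i + m • 1 - μ • ε i) = (g j + m • 1 - μ • ε j) * ε i * g j
  ε_mul_ε_of_adj (i j : V) : Q.Adj i j → ε i * ε j = d • (g j * g i * ε j)
  ε_mul_ε_mul_g (i j : V) : Q.Adj i j → ε i * ε j * g i = d • (ε i * (g j + m • 1 - μ • ε j))
  g_mul_ε_mul_ε (i j : V) : Q.Adj i j → g i * ε j * ε i = d • ((g j + m • 1 - μ • ε j) * ε i)
  ε_mul_ε_mul_ε (i j : V) : Q.Adj i j → ε i * ε j * ε i = d • d • ε i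
  ε_mul_g_mul_ε (i j : V) : Q.Adj i j → ε i * g j * ε i = l • d • ε i

/-- The submodule spanned by the two generators attached to a node. -/
def pairSpan (O : Type*) [CommRing O] {A : Type*} [Ring A] [Algebra O A] (g ε : V → A) (i : V) :
    Submodule O A := Submodule.span O {g i, ε i}

variable {l l' m μ d : O} {g ε : V → A}

lemma g_mem_pairSpan (i : V) : g i ∈ pairSpan O g ε i :=
  Submodule.subset_span (Set.mem_insert _ _)

lemma ε_mem_pairSpan (i : V) : ε i ∈ pairSpan O g ε i :=
  Submodule.subset_span (Set.mem_insert_of_mem _ rfl)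

lemma g_mem_unitalSpan (i : V) : g i ∈ unitalSpan (pairSpan O g ε) :=
  le_unitalSpan i (g_mem_pairSpan i)

lemma ε_mem_unitalSpan (i : V) : ε i ∈ unitalSpan (pairSpan O g ε) :=
  le_unitalSpan i (ε_mem_pairSpan i)

lemma adjoin_unitalSpan_pairSpan :
    Algebra.adjoin O (unitalSpan (pairSpan O g ε) : Set A) =
      Algebra.adjoin O (Set.range g ∪ Set.range ε) := by
  have hle : unitalSpan (pairSpan O g ε) ≤
      Subalgebra.toSubmodule (Algebra.adjoin O (Set.range g ∪ Set.range ε)) := by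
    refine sup_le (Submodule.one_le.2 (one_mem (Algebra.adjoin O _))) (iSup_le fun i => ?_)
    refine Submodule.span_le.2 (Set.pair_subset ?_ ?_)
    · exact Algebra.subset_adjoin (.inl ⟨i, rfl⟩)
    · exact Algebra.subset_adjoin (.inr ⟨i, rfl⟩)
  refine le_antisymm (Algebra.adjoin_le hle) (Algebra.adjoin_mono ?_)
  rintro _ (⟨i, rfl⟩ | ⟨i, rfl⟩)
  exacts [g_mem_unitalSpan i, ε_mem_unitalSpan i]

namespace BMWLatticeRel

lemma of_injective {B : Type*} [Ring B] [Algebra O B] (f : A →ₐ[O] B) (hf : Function.Injective f)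
    (h : BMWLatticeRel Q l l' m μ d (f ∘ g) (f ∘ ε)) : BMWLatticeRel Q l l' m μ d g ε where
  g_mul_g i := hf (by simpa using h.g_mul_g i)
  g_mul_ε i := hf (by simpa using h.g_mul_ε i)
  ε_mul_g i := hf (by simpa using h.ε_mul_g i)
  ε_mul_ε i := hf (by simpa using h.ε_mul_ε i)
  g_comm i j hne hadj := hf (by simpa using h.g_comm i j hne hadj)
  g_comm_ε i j hne hadj := hf (by simpa using h.g_comm_ε i j hne hadj)
  ε_comm i j hne hadj := hf (by simpa using h.ε_comm i j hne hadj)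
  braid i j hadj := hf (by simpa using h.braid i j hadj)
  g_mul_g_mul_ε i j hadj := hf (by simpa using h.g_mul_g_mul_ε i j hadj)
  g_mul_ε_mul_inv i j hadj := hf (by simpa using h.g_mul_ε_mul_inv i j hadj)
  ε_mul_ε_of_adj i j hadj := hf (by simpa using h.ε_mul_ε_of_adj i j hadj)
  ε_mul_ε_mul_g i j hadj := hf (by simpa using h.ε_mul_ε_mul_g i j hadj)
  g_mul_ε_mul_ε i j hadj := hf (by simpa using h.g_mul_ε_mul_ε i j hadj)
  ε_mul_ε_mul_ε i j hadj := hf (by simpa using h.ε_mul_ε_mul_ε i j hadj)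
  ε_mul_g_mul_ε i j hadj := hf (by simpa using h.ε_mul_g_mul_ε i j hadj)

lemma limitBrauerRel {B : Type*} [Ring B] [Algebra O B] (h : BMWLatticeRel Q l l' m μ d g ε)
    (f : A →ₐ[O] B) (hm : algebraMap O B m = 0) (hμ : algebraMap O B μ = 0)
    (hd : algebraMap O B d = 0) (hl : algebraMap O B l' = 1) :
    LimitBrauerRel Q (f ∘ g) (f ∘ ε) where
  s_mul_s i := by simpa [Algebra.smul_def, hm, hμ] using congrArg f (h.g_mul_g i)
  s_mul_ε i := by simpa [Algebra.smul_def, hl] using congrArg f (h.g_mul_ε i)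
  ε_mul_s i := by simpa [Algebra.smul_def, hl] using congrArg f (h.ε_mul_g i)
  ε_mul_ε i := by simpa using congrArg f (h.ε_mul_ε i)
  s_comm i j hne hadj := by simpa using congrArg f (h.g_comm i j hne hadj)
  s_comm_ε i j hne hadj := by simpa using congrArg f (h.g_comm_ε i j hne hadj)
  ε_comm i j hne hadj := by simpa using congrArg f (h.ε_comm i j hne hadj)
  braid i j hadj := by simpa using congrArg f (h.braid i j hadj)
  s_mul_s_mul_ε i j hadj := by simpa using congrArg f (h.g_mul_g_mul_ε i j hadj)
  ε_mul_ε_of_adj i j hadj := by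
    simpa [Algebra.smul_def, hd] using congrArg f (h.ε_mul_ε_of_adj i j hadj)

lemma pairSpan_mul_self_le (h : BMWLatticeRel Q l l' m μ d g ε) (i : V) :
    pairSpan O g ε i * pairSpan O g ε i ≤ unitalSpan (pairSpan O g ε) := by
  have hg : g i ∈ unitalSpan (pairSpan O g ε) := g_mem_unitalSpan i
  have hε : ε i ∈ unitalSpan (pairSpan O g ε) := ε_mem_unitalSpan i
  conv_lhs => rw [pairSpan, Submodule.span_mul_span]
  rw [Submodule.span_le]
  rintro _ ⟨a, rfl | rfl, b, rfl | rfl, rfl⟩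
  · simp only [h.g_mul_g]
    exact add_mem (sub_mem one_mem_unitalSpan (Submodule.smul_mem _ _ hg))
      (Submodule.smul_mem _ _ hε)
  · simp only [h.g_mul_ε]; exact Submodule.smul_mem _ _ hε
  · simp only [h.ε_mul_g]; exact Submodule.smul_mem _ _ hε
  · simp only [h.ε_mul_ε]; exact hε

lemma pairSpan_mul_comm (h : BMWLatticeRel Q l l' m μ d g ε) (i j : V) (hne : i ≠ j)
    (hadj : ¬ Q.Adj i j) :
    pairSpan O g ε i * pairSpan O g ε j = pairSpan O g ε j * pairSpan O g ε i := by
  have hadj' : ¬ Q.Adj j i := fun hji => hadj hji.symm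
  rw [pairSpan, pairSpan, Submodule.span_mul_span, Submodule.span_mul_span]
  congr 1
  ext t
  simp only [Set.mem_mul, Set.mem_insert_iff, Set.mem_singleton_iff, exists_eq_or_imp,
    exists_eq_left, h.g_comm i j hne hadj, h.g_comm_ε i j hne hadj, h.ε_comm i j hne hadj,
    h.g_comm_ε j i hne.symm hadj']
  tauto

lemma g_mul_ε_mul_g (h : BMWLatticeRel Q l l' m μ d g ε) {i j : V} (hadj : Q.Adj i j) :
    g i * ε j * g i = g j * ε i * g j + m • (ε i * g j) - μ • (ε j * ε i * g j)
      - m • (g i * ε j) + μ • (g i * ε j * ε i) := by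
  have hinv := h.g_mul_ε_mul_inv i j hadj
  simp only [mul_sub, mul_add, sub_mul, add_mul, mul_smul_comm, smul_mul_assoc, mul_one,
    one_mul] at hinv
  rw [sub_eq_iff_eq_add, ← eq_sub_iff_add_eq] at hinv
  rw [hinv]
  abel

lemma pairSpan_braid_le (h : BMWLatticeRel Q l l' m μ d g ε) {I : Ideal O} (hm : m ∈ I)
    (hμ : μ ∈ I) (hd : d ∈ I) (i j : V) (hadj : Q.Adj i j) :
    pairSpan O g ε i * pairSpan O g ε j * pairSpan O g ε i ≤
      pairSpan O g ε j * pairSpan O g ε i * pairSpan O g ε j ⊔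
        I • unitalSpan (pairSpan O g ε) ^ 3 := by
  set F := unitalSpan (pairSpan O g ε)
  set X := pairSpan O g ε j * pairSpan O g ε i * pairSpan O g ε j ⊔ I • F ^ 3
  have hg (k : V) : g k ∈ F := g_mem_unitalSpan k
  have hε (k : V) : ε k ∈ F := ε_mem_unitalSpan k
  have hinv (k : V) : g k + m • 1 - μ • ε k ∈ F :=
    sub_mem (add_mem (hg k) (F.smul_mem _ one_mem_unitalSpan)) (F.smul_mem _ (hε k))
  have hbraid {a b c : A} (ha : a ∈ pairSpan O g ε j) (hb : b ∈ pairSpan O g ε i)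
      (hc : c ∈ pairSpan O g ε j) : a * b * c ∈ X :=
    Submodule.mem_sup_left (Submodule.mul_mem_mul (Submodule.mul_mem_mul ha hb) hc)
  have hsmall₃ {r : O} {a b c : A} (hr : r ∈ I) (ha : a ∈ F) (hb : b ∈ F) (hc : c ∈ F) :
      r • (a * b * c) ∈ X :=
    Submodule.mem_sup_right (smul_mul_mul_mem_smul_pow hr ha hb hc)
  have hsmall₂ {r : O} {a b : A} (hr : r ∈ I) (ha : a ∈ F) (hb : b ∈ F) : r • (a * b) ∈ X := by
    simpa only [mul_one] using hsmall₃ hr ha hb one_mem_unitalSpan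
  have hsmall₁ {r : O} {a : A} (hr : r ∈ I) (ha : a ∈ F) : r • a ∈ X := by
    simpa only [mul_one] using hsmall₂ hr ha one_mem_unitalSpan
  conv_lhs => rw [pairSpan, pairSpan, Submodule.span_mul_span, Submodule.span_mul_span]
  rw [Submodule.span_le]
  rintro _ ⟨_, ⟨a, rfl | rfl, b, rfl | rfl, rfl⟩, c, rfl | rfl, rfl⟩
  · simp only [h.braid i j hadj]
    exact hbraid (g_mem_pairSpan j) (g_mem_pairSpan i) (g_mem_pairSpan j)
  · simp only [h.g_mul_g_mul_ε i j hadj]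
    exact hbraid (ε_mem_pairSpan j) (g_mem_pairSpan i) (g_mem_pairSpan j)
  · simp only [h.g_mul_ε_mul_g hadj]
    exact add_mem (sub_mem (sub_mem (add_mem
      (hbraid (g_mem_pairSpan j) (ε_mem_pairSpan i) (g_mem_pairSpan j))
      (hsmall₂ hm (hε i) (hg j))) (hsmall₃ hμ (hε j) (hε i) (hg j)))
      (hsmall₂ hm (hg i) (hε j))) (hsmall₃ hμ (hg i) (hε j) (hε i))
  · simp only [h.g_mul_ε_mul_ε i j hadj]; exact hsmall₂ hd (hinv j) (hε i)
  · simp only [← h.g_mul_g_mul_ε j i hadj.symm]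
    exact hbraid (g_mem_pairSpan j) (g_mem_pairSpan i) (ε_mem_pairSpan j)
  · simp only [h.ε_mul_g_mul_ε i j hadj]; exact X.smul_mem _ (hsmall₁ hd (hε i))
  · simp only [h.ε_mul_ε_mul_g i j hadj]; exact hsmall₂ hd (hε i) (hinv j)
  · simp only [h.ε_mul_ε_mul_ε i j hadj]; exact X.smul_mem _ (hsmall₁ hd (hε i))

theorem finite_adjoin [Fintype V] [DecidableEq V] [IsLocalRing O]
    (h : BMWLatticeRel Q l l' m μ d g ε) (hQ : IsFiniteType Q)
    (hm : m ∈ IsLocalRing.maximalIdeal O) (hμ : μ ∈ IsLocalRing.maximalIdeal O)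
    (hd : d ∈ IsLocalRing.maximalIdeal O) :
    Module.Finite O (Algebra.adjoin O (Set.range g ∪ Set.range ε)) := by
  rw [← adjoin_unitalSpan_pairSpan]
  exact hQ.finite_adjoin_unitalSpan (fun i => Submodule.fg_span (Set.toFinite _))
    h.pairSpan_mul_self_le h.pairSpan_mul_comm (h.pairSpan_braid_le hm hμ hd)

end BMWLatticeRel

end BMWLatticeRel

/-! ### Lifting semisimplicity from the special fibre of a lattice -/

section Semiprime

open TensorProduct

/-- A ring is semiprime if `x R x = 0` implies `x = 0`. For Artinian rings this is equivalent to
semisimplicity, and unlike semisimplicity it passes to and from lattices. -/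
def IsSemiprimeRing (R : Type*) [Ring R] : Prop := ∀ x : R, (∀ a, x * a * x = 0) → x = 0

lemma isSemiprimeRing_of_isSemisimpleRing (R : Type*) [Ring R] [IsSemisimpleRing R] :
    IsSemiprimeRing R := by
  intro x hx
  have hmem : x ∈ Ring.jacobson R := by
    rw [← Ideal.jacobson_bot, Ideal.mem_jacobson_iff]
    refine fun y => ⟨1 - y * x, Ideal.mem_bot.2 ?_⟩
    calc (1 - y * x) * y * x + (1 - y * x) - 1 = -(y * (x * y * x)) := by noncomm_ring
      _ = 0 := by rw [hx, mul_zero, neg_zero]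
  rwa [IsSemisimpleRing.jacobson_eq_bot] at hmem

lemma IsSemiprimeRing.isSemisimpleRing {R : Type*} [Ring R] [IsArtinianRing R]
    (hR : IsSemiprimeRing R) : IsSemisimpleRing R := by
  rw [IsArtinianRing.isSemisimpleRing_iff_jacobson]
  obtain ⟨k, hk⟩ := IsArtinianRing.isNilpotent_jacobson_bot (R := R)
  rw [Ideal.jacobson_bot] at hk
  induction k with
  | zero =>
    rw [Submodule.pow_zero, Ideal.one_eq_top] at hk
    exact eq_bot_mono le_top hk
  | succ k ih =>
    rcases k.eq_zero_or_pos with rfl | hpos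
    · rwa [zero_add, Submodule.pow_one] at hk
    refine ih ((Submodule.eq_bot_iff _).2 fun y hy => hR y fun a => ?_)
    have hy' : y ∈ Ring.jacobson R :=
      Submodule.pow_one (Ring.jacobson R) ▸ Ideal.pow_le_pow_right hpos hy
    have hmul : y * (a * y) ∈ Ring.jacobson R ^ k * Ring.jacobson R :=
      Ideal.mul_mem_mul hy (Ideal.mul_mem_left _ _ hy')
    rw [← Submodule.pow_succ, hk] at hmul
    exact mul_assoc y a y ▸ hmul

section BaseChange

variable {O : Type*} [CommRing O] [IsDomain O] [ValuationRing O]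

lemma exists_forall_dvd {ι : Type*} [Finite ι] [Nonempty ι] (f : ι → O) : ∃ i, ∀ j, f i ∣ f j :=
  Directed.finite_le (r := fun i j => f j ∣ f i) (f := id)
    (fun i j => (ValuationRing.dvd_total (f i) (f j)).elim
      (fun h => ⟨i, dvd_rfl, h⟩) (fun h => ⟨j, h, dvd_rfl⟩)) id

lemma exists_smul_eq_and_one_tmul_ne_zero {L : Type*} [AddCommGroup L] [Module O L]
    [Module.Free O L] [Module.Finite O L] (κ : Type*) [CommRing κ] [Nontrivial κ] [Algebra O κ]
    {y : L} (hy : y ≠ 0) : ∃ (c : O) (w : L), c • w = y ∧ (1 : κ) ⊗ₜ[O] w ≠ 0 := by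
  let b := Module.Free.chooseBasis O L
  have : Nonempty (Module.Free.ChooseBasisIndex O L) := by
    by_contra hempty
    rw [not_nonempty_iff] at hempty
    exact hy (b.ext_elem fun i => hempty.elim i)
  obtain ⟨i, hi⟩ := exists_forall_dvd (b.repr y)
  choose q hq using hi
  have hcoord (j) : b.repr (∑ j, q j • b j) j = q j := congrFun (b.repr_sum_self q) j
  have hsmul : b.repr y i • ∑ j, q j • b j = y :=
    b.ext_elem fun j => by
      rw [map_smul, Finsupp.smul_apply, hcoord, smul_eq_mul, ← hq]
  have hi0 : b.repr y i ≠ 0 := by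
    rintro hi0
    exact hy (by rw [← hsmul, hi0, zero_smul])
  have hqi : q i = 1 := mul_left_cancel₀ hi0 (by rw [← hq, mul_one])
  refine ⟨b.repr y i, ∑ j, q j • b j, hsmul, fun hzero => ?_⟩
  have hrepr := Module.Basis.baseChange_repr_tmul κ b 1 (∑ j, q j • b j) i
  rw [hzero, hcoord, hqi, map_zero, Finsupp.zero_apply, one_smul] at hrepr
  exact zero_ne_one hrepr

lemma IsSemiprimeRing.of_baseChange {L : Type*} [Ring L] [Algebra O L] [Module.Free O L]
    [Module.Finite O L] {κ : Type*} [CommRing κ] [Nontrivial κ] [Algebra O κ]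
    (h : IsSemiprimeRing (κ ⊗[O] L)) : IsSemiprimeRing L := by
  intro y hy
  by_contra hy0
  obtain ⟨c, w, rfl, hw⟩ := exists_smul_eq_and_one_tmul_ne_zero (O := O) κ hy0
  have hc : c ≠ 0 := fun hc => hy0 (by rw [hc, zero_smul])
  have hwaw (a : L) : w * a * w = 0 := by
    have hcc : (c * c) • (w * a * w) = 0 := by
      simpa only [smul_mul_assoc, mul_smul_comm, smul_smul] using hy a
    exact (smul_eq_zero.1 hcc).resolve_left (mul_ne_zero hc hc)
  refine hw (h _ fun z => ?_)
  induction z using TensorProduct.induction_on with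
  | zero => rw [mul_zero, zero_mul]
  | tmul k a => simp only [Algebra.TensorProduct.tmul_mul_tmul, hwaw, tmul_zero]
  | add u v hu hv => rw [mul_add, add_mul, hu, hv, add_zero]

end BaseChange

section Lattice

variable (O K : Type*) {A : Type*} [CommRing O] [Field K] [Algebra O K] [Ring A]
  [Algebra K A] [Algebra O A] [IsScalarTower O K A] {S : Set A}

lemma finite_of_finite_adjoin [Module.Finite O (Algebra.adjoin O S)]
    (hgen : Algebra.adjoin K S = ⊤) : Module.Finite K A := by
  obtain ⟨t, ht⟩ : (Subalgebra.toSubmodule (Algebra.adjoin O S)).FG := Module.Finite.iff_fg.1 ‹_›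
  refine ⟨t, eq_top_iff.2 ?_⟩
  rw [← Algebra.top_toSubmodule, ← hgen, Algebra.adjoin_eq_span, Submodule.span_le]
  intro x hx
  have hxt : x ∈ Submodule.span O (t : Set A) := by
    rw [ht, Algebra.adjoin_eq_span]
    exact Submodule.subset_span hx
  exact Submodule.span_subset_span O K _ hxt

variable [IsDomain O] [IsFractionRing O K]

lemma IsSemiprimeRing.of_adjoin (h : IsSemiprimeRing (Algebra.adjoin O S))
    (hgen : Algebra.adjoin K S = ⊤) : IsSemiprimeRing A := by
  have : Module.IsTorsionFree O A := Module.IsTorsionFree.trans_faithfulSMul O K A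
  intro x hx
  have hxS : x ∈ Submodule.span K (Submonoid.closure S : Set A) := by
    rw [← Algebra.adjoin_eq_span K, hgen]
    exact Algebra.mem_top (R := K)
  obtain ⟨⟨c, hc⟩, hcx⟩ := multiple_mem_span_of_mem_localization_span (nonZeroDivisors O) K _ x hxS
  have hmem : c • x ∈ Algebra.adjoin O S := by
    rwa [← Subalgebra.mem_toSubmodule, Algebra.adjoin_eq_span]
  have hzero : (⟨c • x, hmem⟩ : Algebra.adjoin O S) = 0 := h _ fun a => Subtype.ext <| by
    change c • x * (a : A) * (c • x) = 0
    rw [mul_smul_comm, smul_mul_assoc, smul_mul_assoc, hx, smul_zero, smul_zero]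
  exact (smul_eq_zero.1 (congrArg Subtype.val hzero)).resolve_left (nonZeroDivisors.ne_zero hc)

theorem isSemisimpleRing_of_baseChange_adjoin [ValuationRing O]
    [Module.Finite O (Algebra.adjoin O S)] (hgen : Algebra.adjoin K S = ⊤) (κ : Type*)
    [CommRing κ] [Nontrivial κ] [Algebra O κ] [IsSemisimpleRing (κ ⊗[O] Algebra.adjoin O S)] :
    IsSemisimpleRing A := by
  have : Module.Finite K A := finite_of_finite_adjoin O K hgen
  have : IsArtinianRing A := IsArtinianRing.of_finite K A
  have : Module.IsTorsionFree O A := Module.IsTorsionFree.trans_faithfulSMul O K A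
  have : Module.Flat O (Algebra.adjoin O S) :=
    Module.Flat.flat_iff_torsion_eq_bot_of_isBezout.2
      (Submodule.isTorsionFree_iff_torsion_eq_bot.1 inferInstance)
  have : Module.Free O (Algebra.adjoin O S) := Module.free_of_flat_of_isLocalRing
  have hfibre := isSemiprimeRing_of_isSemisimpleRing (κ ⊗[O] Algebra.adjoin O S)
  exact (IsSemiprimeRing.of_adjoin O K hfibre.of_baseChange hgen).isSemisimpleRing

end Lattice

end Semiprime

section Semisimplicity

variable {V : Type*} [Fintype V] [DecidableEq V] {Q : SimpleGraph V} {O A : Type*} [CommRing O]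
  [IsDomain O] [ValuationRing O] [CharZero (IsLocalRing.ResidueField O)] (K : Type*) [Field K]
  [Algebra O K] [IsFractionRing O K] [Ring A] [Algebra K A] [Algebra O A] [IsScalarTower O K A]
  {l l' m μ d : O} {g ε : V → A}

open TensorProduct in
theorem BMWLatticeRel.isSemisimpleRing (h : BMWLatticeRel Q l l' m μ d g ε) (hQ : IsFiniteType Q)
    (hm : m ∈ IsLocalRing.maximalIdeal O) (hμ : μ ∈ IsLocalRing.maximalIdeal O)
    (hd : d ∈ IsLocalRing.maximalIdeal O) (hl : l' - 1 ∈ IsLocalRing.maximalIdeal O)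
    (hgen : Algebra.adjoin K (Set.range g ∪ Set.range ε) = ⊤) : IsSemisimpleRing A := by
  let L := Algebra.adjoin O (Set.range g ∪ Set.range ε)
  let κ := IsLocalRing.ResidueField O
  let gL (i : V) : L := ⟨g i, Algebra.subset_adjoin (.inl ⟨i, rfl⟩)⟩
  let εL (i : V) : L := ⟨ε i, Algebra.subset_adjoin (.inr ⟨i, rfl⟩)⟩
  have : Module.Finite O L := h.finite_adjoin hQ hm hμ hd
  have hL : BMWLatticeRel Q l l' m μ d gL εL := .of_injective L.val Subtype.val_injective h
  let π : L →ₐ[O] κ ⊗[O] L := Algebra.TensorProduct.includeRight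
  have hzero {r : O} (hr : r ∈ IsLocalRing.maximalIdeal O) : algebraMap O (κ ⊗[O] L) r = 0 := by
    rw [IsScalarTower.algebraMap_apply O κ, IsLocalRing.ResidueField.algebraMap_eq,
      (IsLocalRing.residue_eq_zero_iff r).2 hr, map_zero]
  have hone : algebraMap O (κ ⊗[O] L) l' = 1 := by
    rw [← sub_eq_zero, ← map_one (algebraMap O (κ ⊗[O] L)), ← map_sub, hzero hl]
  have hlimit : LimitBrauerRel Q (π ∘ gL) (π ∘ εL) :=
    hL.limitBrauerRel π (hzero hm) (hzero hμ) (hzero hd) hone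
  have hgenL : Algebra.adjoin O (Set.range gL ∪ Set.range εL) = ⊤ := by
    rw [eq_top_iff, ← Algebra.adjoin_adjoin_coe_preimage]
    refine Algebra.adjoin_mono ?_
    rintro x (⟨i, hi⟩ | ⟨i, hi⟩)
    exacts [.inl ⟨i, Subtype.ext hi⟩, .inr ⟨i, Subtype.ext hi⟩]
  have hgenκ : Algebra.adjoin κ (Set.range (π ∘ gL) ∪ Set.range (π ∘ εL)) = ⊤ := by
    rw [Set.range_comp, Set.range_comp, ← Set.image_union]
    exact Algebra.TensorProduct.adjoin_one_tmul_image_eq_top _ hgenL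
  have : IsSemisimpleRing (κ ⊗[O] L) := hlimit.isSemisimpleRing hQ hgenκ
  exact isSemisimpleRing_of_baseChange_adjoin O K hgen κ

end Semisimplicity

/-! ### A valuation ring of `ℚ(l, δ)` centred at `l = 1`, `δ⁻¹ = 0` -/

section Valuation

open Polynomial

/-- The embedding `ℚ[x] → ℚ(δ)` sending `x` to `δ⁻¹`. -/
noncomputable def evalDeltaInv : ℚ[X] →+* RatFunc ℚ :=
  (aeval (RatFunc.X⁻¹ : RatFunc ℚ)).toRingHom

lemma evalDeltaInv_injective : Function.Injective evalDeltaInv := by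
  have htrans : Transcendental ℚ (RatFunc.X⁻¹ : RatFunc ℚ) := by
    refine fun h => RatFunc.transcendental_X (K := ℚ) ?_
    convert h.inv
    · exact Subsingleton.elim _ _
    · exact (inv_inv _).symm
  exact transcendental_iff_injective.1 htrans

/-- The embedding `ℚ[x][y] → ℚ(l, δ)` sending `x` to `δ⁻¹` and `y` to `l - 1`. -/
noncomputable def evalDeltaInvLSubOne : ℚ[X][X] →+* BMWField :=
  ((algebraMap (RatFunc ℚ)[X] BMWField).comp (taylorAlgHom (-1 : RatFunc ℚ)).toRingHom).comp
    (mapRingHom evalDeltaInv)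

lemma evalDeltaInvLSubOne_apply (p : ℚ[X][X]) : evalDeltaInvLSubOne p =
    algebraMap (RatFunc ℚ)[X] BMWField (taylor (-1) (p.map evalDeltaInv)) := rfl

lemma evalDeltaInvLSubOne_injective : Function.Injective evalDeltaInvLSubOne :=
  (IsFractionRing.injective (RatFunc ℚ)[X] BMWField).comp
    ((taylor_injective (-1 : RatFunc ℚ)).comp (map_injective _ evalDeltaInv_injective))

lemma evalDeltaInvLSubOne_X : evalDeltaInvLSubOne X = lVar - 1 := by
  simp [evalDeltaInvLSubOne_apply, lVar, sub_eq_add_neg]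

lemma evalDeltaInvLSubOne_C_X : evalDeltaInvLSubOne (C X) = deltaVar⁻¹ := by
  simp [evalDeltaInvLSubOne_apply, evalDeltaInv, deltaVar]

/-- Chevalley's extension theorem, applied to the maximal ideal `(l - 1, δ⁻¹)` of
`ℚ[l - 1, δ⁻¹]`. -/
theorem exists_valuationSubring_bmwField : ∃ O : ValuationSubring BMWField,
    O.valuation deltaVar⁻¹ < 1 ∧ O.valuation (lVar - 1) < 1 ∧
      CharZero (IsLocalRing.ResidueField O) := by
  let evalZero : ℚ[X][X] →+* ℚ := (evalRingHom 0).comp (evalRingHom 0)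
  let e : ℚ[X][X] ≃+* evalDeltaInvLSubOne.range :=
    RingEquiv.ofBijective evalDeltaInvLSubOne.rangeRestrict
      ⟨fun _ _ h => evalDeltaInvLSubOne_injective (congrArg Subtype.val h),
        evalDeltaInvLSubOne.rangeRestrict_surjective⟩
  obtain ⟨O, hle, hnonunits⟩ := Ideal.image_subset_nonunits_valuationSubring
    (RingHom.ker (evalZero.comp e.symm.toRingHom)) (RingHom.ker_ne_top _)
  have hlt (p : ℚ[X][X]) (hp : evalZero p = 0) : O.valuation (evalDeltaInvLSubOne p) < 1 := by
    refine O.mem_nonunits_iff.1 (hnonunits ⟨e p, ?_, rfl⟩)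
    change evalZero (e.symm (e p)) = 0
    rw [e.symm_apply_apply, hp]
  refine ⟨O, ?_, ?_, ?_⟩
  · rw [← evalDeltaInvLSubOne_C_X]
    exact hlt _ (by simp [evalZero])
  · rw [← evalDeltaInvLSubOne_X]
    exact hlt _ (by simp [evalZero])
  · let f : ℚ →+* O :=
      (evalDeltaInvLSubOne.comp (C.comp C)).codRestrict O.toSubring fun q => hle ⟨_, rfl⟩
    exact charZero_of_injective_ringHom ((IsLocalRing.residue O).comp f).injective

section Parameters

variable {K Γ : Type*} [Field K] [LinearOrderedCommGroupWithZero Γ] {v : Valuation K Γ}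
  {l δ m : K}

lemma valuation_eq_one_of_sub_one_lt_one (hl : v (l - 1) < 1) : v l = 1 := by
  simpa using v.map_one_add_of_lt hl

lemma valuation_inv_sub_one_lt_one (hl : v (l - 1) < 1) : v (l⁻¹ - 1) < 1 := by
  have hvl := valuation_eq_one_of_sub_one_lt_one hl
  have hl0 : l ≠ 0 := by
    rintro rfl
    simp at hvl
  calc v (l⁻¹ - 1) = v (-(l⁻¹ * (l - 1))) := by rw [mul_sub, inv_mul_cancel₀ hl0]; ring_nf
    _ = v (l - 1) := by rw [Valuation.map_neg, map_mul, map_inv₀, hvl, inv_one, one_mul]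
    _ < 1 := hl

lemma valuation_mul_lt_one (hl : v (l - 1) < 1) (hδ0 : δ ≠ 0) (hδ : v δ⁻¹ < 1)
    (hm : m * (1 - δ) = l - l⁻¹) : v (m * δ) < 1 := by
  have hδ1 : v 1 < v δ := by
    rwa [map_one, ← inv_lt_one₀ (v.pos_iff.2 hδ0), ← map_inv₀]
  calc v (m * δ) = v (l - 1 - (l⁻¹ - 1)) := by
        rw [map_mul, ← v.map_sub_eq_of_lt_right hδ1, ← map_mul, hm, sub_sub_sub_cancel_right]
    _ < 1 := (v.map_sub _ _).trans_lt (max_lt hl (valuation_inv_sub_one_lt_one hl))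

lemma valuation_lt_one (hl : v (l - 1) < 1) (hδ0 : δ ≠ 0) (hδ : v δ⁻¹ < 1)
    (hm : m * (1 - δ) = l - l⁻¹) : v m < 1 := by
  calc v m = v (m * δ) * v δ⁻¹ := by rw [← map_mul, mul_inv_cancel_right₀ hδ0]
    _ < 1 := mul_lt_one_of_lt_of_le (valuation_mul_lt_one hl hδ0 hδ hm) hδ.le

end Parameters

end Valuation

/-! ### The diagrams of type `A`, `D` and `E` have finite type -/

section FiniteType

variable {V : Type*} [Fintype V] {Q : SimpleGraph V} [DecidableRel Q.Adj]

lemma sum_sum_neighborFinset_comm {M : Type*} [AddCommMonoid M] (f : V → V → M) :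
    ∑ i, ∑ j ∈ Q.neighborFinset i, f i j = ∑ i, ∑ j ∈ Q.neighborFinset i, f j i :=
  Finset.sum_comm' fun i j => by simp [Q.adj_comm]

variable [DecidableEq V]

lemma titsForm_self_eq_sum (v : V → ℤ) :
    titsForm Q v v = ∑ i, (2 * v i ^ 2 - ∑ j ∈ Q.neighborFinset i, v i * v j) := by
  rw [titsForm, Matrix.toBilin'_apply', Matrix.sub_mulVec, dotProduct_sub, Finset.sum_sub_distrib]
  congr 1
  · exact Finset.sum_congr rfl fun i _ => by simp [Matrix.mulVec_diagonal]; ring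
  · refine Finset.sum_congr rfl fun i _ => ?_
    rw [SimpleGraph.adjMatrix_mulVec_apply, Finset.mul_sum]
    congr!

lemma titsForm_self_eq_sum_sq {u v : V → ℤ} (hu : ∀ i, u i ≠ 0) :
    (titsForm Q v v : ℚ) =
      ∑ i, (v i / u i : ℚ) ^ 2 * (u i * (2 * u i - ∑ j ∈ Q.neighborFinset i, u j : ℤ)) +
        ∑ i, ∑ j ∈ Q.neighborFinset i, (u i * u j : ℚ) / 2 * (v i / u i - v j / u j) ^ 2 := by
  obtain ⟨x, hx⟩ : ∃ x : V → ℚ, ∀ i, (v i : ℚ) = u i * x i :=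
    ⟨fun i => v i / u i, fun i => (mul_div_cancel₀ _ (Int.cast_ne_zero.2 (hu i))).symm⟩
  have hdiv (i : V) : (v i / u i : ℚ) = x i := by
    rw [hx, mul_div_cancel_left₀ _ (Int.cast_ne_zero.2 (hu i))]
  have hsymm : ∑ i, ∑ j ∈ Q.neighborFinset i, (u i * u j : ℚ) / 2 * (x i - x j) ^ 2 =
      ∑ i, ∑ j ∈ Q.neighborFinset i, (u i * u j : ℚ) * (x i ^ 2 - x i * x j) := by
    calc ∑ i, ∑ j ∈ Q.neighborFinset i, (u i * u j : ℚ) / 2 * (x i - x j) ^ 2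
        = ∑ i, ∑ j ∈ Q.neighborFinset i, (u i * u j : ℚ) / 2 * (x i ^ 2 - x i * x j) +
          ∑ i, ∑ j ∈ Q.neighborFinset i, (u j * u i : ℚ) / 2 * (x j ^ 2 - x j * x i) := by
          simp only [← Finset.sum_add_distrib]
          exact Finset.sum_congr rfl fun i _ => Finset.sum_congr rfl fun j _ => by ring
      _ = ∑ i, ∑ j ∈ Q.neighborFinset i, (u i * u j : ℚ) * (x i ^ 2 - x i * x j) := by
          rw [← sum_sum_neighborFinset_comm fun i j => (u i * u j : ℚ) / 2 * (x i ^ 2 - x i * x j)]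
          simp only [← Finset.sum_add_distrib]
          exact Finset.sum_congr rfl fun i _ => Finset.sum_congr rfl fun j _ => by ring
  simp only [hdiv, hsymm]
  rw [titsForm_self_eq_sum, ← Finset.sum_add_distrib]
  push_cast
  refine Finset.sum_congr rfl fun i _ => ?_
  rw [mul_sub, mul_sub, Finset.mul_sum, Finset.mul_sum, sub_add, ← Finset.sum_sub_distrib]
  congr 1
  · rw [hx]; ring
  · exact Finset.sum_congr rfl fun j _ => by rw [hx, hx]; ring

lemma isFiniteType_of_weights [Preorder V] (u : V → ℤ) (hpos : ∀ i, 0 < u i)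
    (hle : ∀ i, ∑ j ∈ Q.neighborFinset i, u j ≤ 2 * u i)
    (hstep : ∀ i, ∑ j ∈ Q.neighborFinset i, u j < 2 * u i ∨ ∃ j, i < j ∧ Q.Adj i j) :
    IsFiniteType Q := by
  intro v
  contrapose!
  intro hv
  have hposQ (i : V) : (0 : ℚ) < u i := Int.cast_pos.2 (hpos i)
  have hexcess (i : V) : 0 ≤
      (v i / u i : ℚ) ^ 2 * (u i * (2 * u i - ∑ j ∈ Q.neighborFinset i, u j : ℤ)) :=
    mul_nonneg (sq_nonneg _) (mul_nonneg (hposQ i).le (Int.cast_nonneg (sub_nonneg.2 (hle i))))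
  have hedge (i j : V) : 0 ≤ (u i * u j : ℚ) / 2 * (v i / u i - v j / u j) ^ 2 :=
    mul_nonneg (half_pos (mul_pos (hposQ i) (hposQ j))).le (sq_nonneg _)
  have hedges (i : V) := Finset.sum_nonneg fun j (_ : j ∈ Q.neighborFinset i) => hedge i j
  have hsum := Int.cast_nonpos (R := ℚ).2 hv
  rw [titsForm_self_eq_sum_sq fun i => (hpos i).ne'] at hsum
  obtain ⟨hexcess_sum, hedge_sum⟩ := (add_eq_zero_iff_of_nonneg
    (Finset.sum_nonneg fun i _ => hexcess i) (Finset.sum_nonneg fun i _ => hedges i)).1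
    (hsum.antisymm (add_nonneg (Finset.sum_nonneg fun i _ => hexcess i)
      (Finset.sum_nonneg fun i _ => hedges i)))
  rw [Finset.sum_eq_zero_iff_of_nonneg fun i _ => hexcess i] at hexcess_sum
  rw [Finset.sum_eq_zero_iff_of_nonneg fun i _ => hedges i] at hedge_sum
  funext i
  suffices h : (v i / u i : ℚ) = 0 by
    exact Int.cast_eq_zero.1 ((div_eq_zero_iff.1 h).resolve_right (hposQ i).ne')
  induction i using WellFoundedGT.induction with
  | ind i ih =>
    obtain hlt | ⟨j, hij, hadj⟩ := hstep i
    · have hne : (u i * (2 * u i - ∑ j ∈ Q.neighborFinset i, u j : ℤ) : ℚ) ≠ 0 :=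
        mul_ne_zero (hposQ i).ne' (Int.cast_ne_zero.2 (sub_pos.2 hlt).ne')
      exact sq_eq_zero_iff.1 ((mul_eq_zero.1 (hexcess_sum i (Finset.mem_univ i))).resolve_right hne)
    · have hij_zero := (Finset.sum_eq_zero_iff_of_nonneg fun j _ => hedge i j).1
        (hedge_sum i (Finset.mem_univ i)) j ((Q.mem_neighborFinset i j).2 hadj)
      have hne : (u i * u j : ℚ) / 2 ≠ 0 := (half_pos (mul_pos (hposQ i) (hposQ j))).ne'
      rw [sub_eq_zero.1 (sq_eq_zero_iff.1 ((mul_eq_zero.1 hij_zero).resolve_left hne)), ih j hij]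

end FiniteType

section TypeADE

variable {n : ℕ}

lemma sum_neighborFinset_le {Q : SimpleGraph (Fin n)} [DecidableRel Q.Adj] {w : ℕ → ℤ}
    (hw : ∀ k, 0 ≤ w k) {i : Fin n} (S : Finset ℕ) (hS : ∀ j, Q.Adj i j → (j : ℕ) ∈ S) :
    ∑ j ∈ Q.neighborFinset i, w j ≤ ∑ k ∈ S, w k := by
  calc ∑ j ∈ Q.neighborFinset i, w j
      = ∑ k ∈ (Q.neighborFinset i).map Fin.valEmbedding, w k := by
        rw [Finset.sum_map]; rfl
    _ ≤ ∑ k ∈ S, w k := ?_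
  refine Finset.sum_le_sum_of_subset_of_nonneg (fun k hk => ?_) fun k _ _ => hw k
  obtain ⟨j, hj, rfl⟩ := Finset.mem_map.1 hk
  exact hS j ((Q.mem_neighborFinset i j).1 hj)

lemma typeA_adj {i j : Fin n} :
    (typeA n).Adj i j ↔ (i : ℕ) + 1 = j ∨ (j : ℕ) + 1 = i := by
  simp only [typeA, SimpleGraph.fromRel_adj, ne_eq, Fin.ext_iff]
  omega

lemma typeD_adj {i j : Fin n} :
    (typeD n).Adj i j ↔ (i : ℕ) < 2 ∧ (j : ℕ) = 2 ∨ (j : ℕ) < 2 ∧ (i : ℕ) = 2 ∨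
      2 ≤ (i : ℕ) ∧ (i : ℕ) + 1 = j ∨ 2 ≤ (j : ℕ) ∧ (j : ℕ) + 1 = i := by
  simp only [typeD, SimpleGraph.fromRel_adj, ne_eq, Fin.ext_iff]
  omega

lemma isFiniteType_typeA (n : ℕ) : IsFiniteType (typeA n) := by
  classical
  have hsum {i : Fin n} :=
    sum_neighborFinset_le (Q := typeA n) (w := 1) (i := i) fun _ => zero_le_one
  refine isFiniteType_of_weights (fun _ => 1) (fun _ => one_pos) (fun i => ?_) fun i => ?_
  · refine (hsum {(i : ℕ) - 1, (i : ℕ) + 1} fun j h => ?_).trans ?_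
    · rw [typeA_adj] at h
      grind
    · simp
  · by_cases hi : (i : ℕ) + 1 < n
    · exact .inr ⟨⟨i + 1, hi⟩, Nat.lt_succ_self _, typeA_adj.2 (.inl rfl)⟩
    · refine .inl ((hsum {(i : ℕ) - 1} fun j h => ?_).trans_lt ?_)
      · rw [typeA_adj] at h
        grind
      · simp

lemma isFiniteType_typeD (n : ℕ) : IsFiniteType (typeD n) := by
  classical
  let w (k : ℕ) : ℤ := if k < 2 then 1 else 2
  have hw (k : ℕ) : 0 < w k := by grind
  have hsum (i : Fin n) := sum_neighborFinset_le (Q := typeD n) (i := i) fun k => (hw k).le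
  refine isFiniteType_of_weights (fun i => w i) (fun i => hw i) (fun i => ?_) fun i => ?_
  · obtain hi | hi | hi : (i : ℕ) < 2 ∨ (i : ℕ) = 2 ∨ 3 ≤ (i : ℕ) := by omega
    · refine (hsum i {2} fun j h => ?_).trans (by rw [Finset.sum_singleton]; grind)
      grind [typeD_adj.1 h]
    · refine (hsum i {0, 1, 3} fun j h => ?_).trans (by simp [w, hi])
      grind [typeD_adj.1 h]
    · refine (hsum i {(i : ℕ) - 1, (i : ℕ) + 1} fun j h => ?_).trans ?_
      · grind [typeD_adj.1 h]
      · rw [Finset.sum_pair (by omega)]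
        grind
  · obtain hi | hi : (i : ℕ) < 2 ∨ 2 ≤ (i : ℕ) := lt_or_ge _ _
    · by_cases hn : 2 < n
      · exact .inr ⟨⟨2, hn⟩, hi, typeD_adj.2 (.inl ⟨hi, rfl⟩)⟩
      · refine .inl ((hsum i ∅ fun j h => ?_).trans_lt (by simp [hw]))
        grind [typeD_adj.1 h]
    · by_cases hn : (i : ℕ) + 1 < n
      · exact .inr ⟨⟨i + 1, hn⟩, Nat.lt_succ_self _, typeD_adj.2 (.inr (.inr (.inl ⟨hi, rfl⟩)))⟩
      · obtain hi' | hi' := hi.eq_or_lt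
        · refine .inl ((hsum i {0, 1} fun j h => ?_).trans_lt (by simp [w, ← hi']))
          grind [typeD_adj.1 h]
        · refine .inl ((hsum i {(i : ℕ) - 1} fun j h => ?_).trans_lt ?_)
          · grind [typeD_adj.1 h]
          · rw [Finset.sum_singleton]
            grind

instance (n : ℕ) : DecidableRel (typeE n).Adj :=
  inferInstanceAs (DecidableRel (SimpleGraph.fromRel _).Adj)

lemma isFiniteType_typeE {n : ℕ} (hn : n ≤ 8) : IsFiniteType (typeE n) := by
  refine isFiniteType_of_weights (fun i => [2, 3, 4, 6, 5, 4, 3, 2].getD i 0) ?_ ?_ ?_ <;>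
    interval_cases n <;> decide

end TypeADE

/-! ### Consequences of the BMW relations -/

/-- The defining relations of the BMW algebra with parameters `l`, `δ` and `m`, for elements `g i`
and `e i` of an algebra over a field, together with the genericity conditions on the parameters. -/
structure BMWPresentation {V : Type*} (Q : SimpleGraph V) {K A : Type*} [Field K] [Ring A]
    [Algebra K A] (l δ m : K) (g e : V → A) : Prop where
  l_ne_zero : l ≠ 0
  δ_ne_zero : δ ≠ 0
  m_ne_zero : m ≠ 0
  m_mul_one_sub_δ : m * (1 - δ) = l - l⁻¹
  one_add_l_mul_m_ne_zero : 1 + l * m ≠ 0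
  g_comm (i j : V) : i ≠ j → ¬ Q.Adj i j → g i * g j = g j * g i
  braid (i j : V) : Q.Adj i j → g i * g j * g i = g j * g i * g j
  quadratic (i : V) : m • e i = l • (g i * g i + m • g i - 1)
  g_mul_e (i : V) : g i * e i = l⁻¹ • e i
  e_mul_g_mul_e (i j : V) : Q.Adj i j → e i * g j * e i = l • e i

namespace BMWPresentation

variable {V : Type*} {Q : SimpleGraph V} {K A : Type*} [Field K] [Ring A] [Algebra K A]
  {l δ m : K} {g e : V → A} {i j : V}

lemma e_eq (h : BMWPresentation Q l δ m g e) (i : V) :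
    e i = (m⁻¹ * l) • (g i * g i + m • g i - 1) := by
  rw [mul_smul, ← h.quadratic, smul_smul, inv_mul_cancel₀ h.m_ne_zero, one_smul]

lemma semiconjBy_e (h : BMWPresentation Q l δ m g e) {x : A} (hx : SemiconjBy x (g i) (g j)) :
    SemiconjBy x (e i) (e j) := by
  rw [h.e_eq i, h.e_eq j, SemiconjBy, mul_smul_comm, smul_mul_assoc]
  congr 1
  exact (((hx.mul_right hx).add_right (hx.smul_right m)).sub_right (.one_right x)).eq

lemma e_mul_g (h : BMWPresentation Q l δ m g e) (i : V) : e i * g i = l⁻¹ • e i := by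
  rw [← (h.semiconjBy_e (Commute.refl (g i))).eq, h.g_mul_e]

lemma g_mul_g (h : BMWPresentation Q l δ m g e) (i : V) :
    g i * g i = 1 - m • g i + (m * l⁻¹) • e i := by
  rw [mul_comm, mul_smul, h.quadratic, smul_smul, inv_mul_cancel₀ h.l_ne_zero, one_smul]
  abel

lemma e_mul_e (h : BMWPresentation Q l δ m g e) (i : V) : e i * e i = δ • e i := by
  have hl := h.l_ne_zero
  have hm := h.m_ne_zero
  have hcoeff : m⁻¹ * l * (l⁻¹ * l⁻¹ + m * l⁻¹ - 1) = δ := by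
    field_simp
    linear_combination l * h.m_mul_one_sub_δ - mul_inv_cancel₀ hl
  calc e i * e i = (m⁻¹ * l) • ((g i * g i + m • g i - 1) * e i) := by
        rw [← smul_mul_assoc, ← h.e_eq]
    _ = (m⁻¹ * l) • (l⁻¹ * l⁻¹ + m * l⁻¹ - 1) • e i := by
        rw [sub_mul, add_mul, mul_assoc, h.g_mul_e, mul_smul_comm, h.g_mul_e, smul_mul_assoc,
          h.g_mul_e, one_mul]
        module
    _ = δ • e i := by rw [smul_smul, hcoeff]

/-- The inverse of the generator `g i`. -/
def gInv (m : K) (g e : V → A) (i : V) : A := g i + m • 1 - m • e i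

lemma g_mul_gInv (h : BMWPresentation Q l δ m g e) (i : V) : g i * gInv m g e i = 1 := by
  rw [gInv, mul_sub, mul_add, h.g_mul_g, mul_smul_comm, mul_smul_comm, h.g_mul_e, mul_one]
  module

lemma gInv_mul_g (h : BMWPresentation Q l δ m g e) (i : V) : gInv m g e i * g i = 1 := by
  rw [gInv, sub_mul, add_mul, h.g_mul_g, smul_mul_assoc, smul_mul_assoc, h.e_mul_g, one_mul]
  module

lemma e_mul_gInv (h : BMWPresentation Q l δ m g e) (i : V) : e i * gInv m g e i = l • e i := by
  have hl : l = l⁻¹ + m - m * δ := by linear_combination -h.m_mul_one_sub_δ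
  rw [gInv, mul_sub, mul_add, h.e_mul_g, mul_smul_comm, mul_smul_comm, h.e_mul_e, mul_one]
  conv_rhs => rw [hl]
  module

lemma g_mul_g_mul_e (h : BMWPresentation Q l δ m g e) (hadj : Q.Adj i j) :
    g i * g j * e i = e j * (g i * g j) :=
  h.semiconjBy_e (by rw [SemiconjBy, h.braid i j hadj, mul_assoc])

lemma g_mul_g_mul_e_mul_e (h : BMWPresentation Q l δ m g e) (hadj : Q.Adj i j) :
    g j * g i * (e j * e i) = e i := by
  calc g j * g i * (e j * e i) = e i * g j * (g i * e i) := by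
        rw [← mul_assoc, h.g_mul_g_mul_e hadj.symm]
        noncomm_ring
    _ = e i := by
        rw [h.g_mul_e, mul_smul_comm, h.e_mul_g_mul_e i j hadj, inv_smul_smul₀ h.l_ne_zero]

lemma g_mul_e_mul_e (h : BMWPresentation Q l δ m g e) (hadj : Q.Adj i j) :
    g i * (e j * e i) = gInv m g e j * e i := by
  calc g i * (e j * e i) = gInv m g e j * g j * g i * (e j * e i) := by
        rw [h.gInv_mul_g, one_mul]
    _ = gInv m g e j * e i := by
        rw [mul_assoc, mul_assoc, ← mul_assoc (g j), h.g_mul_g_mul_e_mul_e hadj]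

lemma e_mul_e_eq_gInv_mul (h : BMWPresentation Q l δ m g e) (hadj : Q.Adj i j) :
    e j * e i = gInv m g e i * (gInv m g e j * e i) := by
  rw [← h.g_mul_e_mul_e hadj, ← mul_assoc, h.gInv_mul_g, one_mul]

lemma e_mul_e_mul_g_mul_g (h : BMWPresentation Q l δ m g e) (hadj : Q.Adj i j) :
    e i * e j * (g i * g j) = e i := by
  calc e i * e j * (g i * g j) = e i * g i * g j * e i := by
        rw [mul_assoc, ← h.g_mul_g_mul_e hadj]
        noncomm_ring
    _ = e i := by
        rw [h.e_mul_g, smul_mul_assoc, smul_mul_assoc, h.e_mul_g_mul_e i j hadj,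
          inv_smul_smul₀ h.l_ne_zero]

lemma e_mul_e_mul_g (h : BMWPresentation Q l δ m g e) (hadj : Q.Adj i j) :
    e i * e j * g i = e i * gInv m g e j := by
  calc e i * e j * g i = e i * e j * (g i * g j) * gInv m g e j := by
        rw [← mul_assoc, mul_assoc _ (g j), h.g_mul_gInv, mul_one]
    _ = e i * gInv m g e j := by rw [h.e_mul_e_mul_g_mul_g hadj]

lemma e_mul_e_mul_e (h : BMWPresentation Q l δ m g e) (hadj : Q.Adj i j) :
    e i * e j * e i = e i := by
  have hexpand : e i * e j * e i = l • (l • e i + (m * δ) • e i - m • (e i * e j * e i)) := by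
    calc e i * e j * e i = e i * gInv m g e i * gInv m g e j * e i := by
          rw [mul_assoc, h.e_mul_e_eq_gInv_mul hadj, ← mul_assoc, ← mul_assoc]
      _ = l • (e i * gInv m g e j * e i) := by
          rw [h.e_mul_gInv, smul_mul_assoc, smul_mul_assoc]
      _ = l • (l • e i + (m * δ) • e i - m • (e i * e j * e i)) := by
          rw [gInv, mul_sub, mul_add, sub_mul, add_mul, h.e_mul_g_mul_e i j hadj, mul_smul_comm,
            mul_one, smul_mul_assoc, h.e_mul_e, mul_smul_comm, smul_mul_assoc, smul_smul]
  have hcoeff : l * (l + m * δ) = 1 + l * m := by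
    linear_combination -l * h.m_mul_one_sub_δ + mul_inv_cancel₀ h.l_ne_zero
  have hsmul : (1 + l * m) • (e i * e j * e i) = (1 + l * m) • e i := by
    calc (1 + l * m) • (e i * e j * e i)
        = l • (l • e i + (m * δ) • e i - m • (e i * e j * e i)) + (l * m) • (e i * e j * e i) := by
          rw [← hexpand, add_smul, one_smul]
      _ = (l * (l + m * δ)) • e i := by module
      _ = (1 + l * m) • e i := by rw [hcoeff]
  exact smul_right_injective A h.one_add_l_mul_m_ne_zero hsmul

lemma e_mul_e_eq_g_mul_g_mul (h : BMWPresentation Q l δ m g e) (hadj : Q.Adj i j) :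
    e j * e i = g i * g j * e i := by
  calc e j * e i = l⁻¹ • (e j * g i * e j) * e i := by
        rw [h.e_mul_g_mul_e j i hadj.symm, inv_smul_smul₀ h.l_ne_zero]
    _ = e j * (g i * g j) * e j * e i := by
        rw [← mul_assoc, mul_assoc (e j * g i), h.g_mul_e, mul_smul_comm]
    _ = g i * g j * (e i * e j * e i) := by
        rw [← h.g_mul_g_mul_e hadj]
        noncomm_ring
    _ = g i * g j * e i := by rw [h.e_mul_e_mul_e hadj]

lemma g_mul_e_mul_gInv (h : BMWPresentation Q l δ m g e) (hadj : Q.Adj i j) :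
    g i * e j * gInv m g e i = gInv m g e j * e i * g j := by
  calc g i * e j * gInv m g e i = gInv m g e j * (g j * g i * e j) * gInv m g e i := by
        rw [← mul_assoc, ← mul_assoc, h.gInv_mul_g, one_mul]
    _ = gInv m g e j * e i * g j := by
        rw [h.g_mul_g_mul_e hadj.symm, ← mul_assoc, ← mul_assoc, mul_assoc _ (g i), h.g_mul_gInv,
          mul_one]

theorem bmwLatticeRel (h : BMWPresentation Q l δ m g e) :
    BMWLatticeRel Q l l⁻¹ m (m * δ) δ⁻¹ g (fun i => δ⁻¹ • e i) := by
  have hδ := h.δ_ne_zero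
  have hinv (i : V) : g i + m • (1 : A) - (m * δ) • δ⁻¹ • e i = gInv m g e i := by
    rw [gInv, smul_smul, mul_inv_cancel_right₀ hδ]
  have hcomm {i j : V} (hne : i ≠ j) (hadj : ¬ Q.Adj i j) : g i * e j = e j * g i :=
    h.semiconjBy_e (h.g_comm i j hne hadj)
  constructor <;> intro i
  · rw [h.g_mul_g, smul_smul, mul_right_comm, mul_inv_cancel_right₀ hδ]
  · rw [mul_smul_comm, h.g_mul_e, smul_comm]
  · rw [smul_mul_assoc, h.e_mul_g, smul_comm]
  · rw [smul_mul_assoc, mul_smul_comm, h.e_mul_e, inv_smul_smul₀ hδ]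
  all_goals intro j
  · exact h.g_comm i j
  · intro hne hadj
    rw [mul_smul_comm, smul_mul_assoc, hcomm hne hadj]
  · intro hne hadj
    have hee : e i * e j = e j * e i :=
      h.semiconjBy_e (hcomm hne.symm (mt Q.adj_symm hadj)).symm
    rw [smul_mul_smul_comm, smul_mul_smul_comm, hee]
  · exact h.braid i j
  all_goals intro hadj
  · rw [mul_smul_comm, h.g_mul_g_mul_e hadj, smul_mul_assoc, smul_mul_assoc, mul_assoc]
  · rw [hinv, hinv, mul_smul_comm, mul_smul_comm, smul_mul_assoc, smul_mul_assoc,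
      h.g_mul_e_mul_gInv hadj]
  · rw [mul_smul_comm, mul_smul_comm, smul_mul_assoc, h.e_mul_e_eq_g_mul_g_mul hadj.symm]
  · simp only [hinv, mul_smul_comm, smul_mul_assoc, h.e_mul_e_mul_g hadj]
  · simp only [hinv, mul_smul_comm, smul_mul_assoc, mul_assoc, h.g_mul_e_mul_e hadj]
  · simp only [mul_smul_comm, smul_mul_assoc, h.e_mul_e_mul_e hadj]
  · simp only [mul_smul_comm, smul_mul_assoc, h.e_mul_g_mul_e i j hadj, smul_comm δ⁻¹ l]

end BMWPresentation

/-! ### Semisimplicity of the BMW algebra -/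

lemma BMWLatticeRel.of_algebraMap {V : Type*} {Q : SimpleGraph V} {O K A : Type*} [CommRing O]
    [Field K] [Algebra O K] [Ring A] [Algebra K A] [Algebra O A] [IsScalarTower O K A]
    {l l' m μ d : O} {g ε : V → A}
    (h : BMWLatticeRel Q (algebraMap O K l) (algebraMap O K l') (algebraMap O K m)
      (algebraMap O K μ) (algebraMap O K d) g ε) : BMWLatticeRel Q l l' m μ d g ε := by
  obtain ⟨_, _, _, _, _, _, _, _, _, _, _, _, _, _, _⟩ := h
  simp only [← map_mul, IsScalarTower.algebraMap_smul] at *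
  constructor <;> assumption

theorem BMWPresentation.isSemisimpleRing {V : Type*} [Fintype V] [DecidableEq V]
    {Q : SimpleGraph V} {K A : Type*} [Field K] [Ring A] [Algebra K A] {l δ m : K} {g e : V → A}
    (h : BMWPresentation Q l δ m g e) (hQ : IsFiniteType Q) (O : ValuationSubring K)
    [CharZero (IsLocalRing.ResidueField O)] (hδ : O.valuation δ⁻¹ < 1)
    (hl : O.valuation (l - 1) < 1) (hgen : Algebra.adjoin K (Set.range g ∪ Set.range e) = ⊤) :
    IsSemisimpleRing A := by
  have hl' := valuation_inv_sub_one_lt_one hl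
  have hm := valuation_lt_one hl h.δ_ne_zero hδ h.m_mul_one_sub_δ
  have hμ := valuation_mul_lt_one hl h.δ_ne_zero hδ h.m_mul_one_sub_δ
  let lift (x : K) (hx : O.valuation x ≤ 1) : O := ⟨x, (O.valuation_le_one_iff x).1 hx⟩
  let lO := lift l (valuation_eq_one_of_sub_one_lt_one hl).le
  let lInvO := lift l⁻¹ (valuation_eq_one_of_sub_one_lt_one hl').le
  let mO := lift m hm.le
  let μO := lift (m * δ) hμ.le
  let dO := lift δ⁻¹ hδ.le
  have mem_maximalIdeal {x : O} (hx : O.valuation x < 1) : x ∈ IsLocalRing.maximalIdeal O :=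
    (O.valuation_lt_one_iff x).2 hx
  let : Algebra O A := Algebra.compHom A (algebraMap O K)
  have : IsScalarTower O K A := .of_algebraMap_eq fun _ => rfl
  have hrel : BMWLatticeRel Q lO lInvO mO μO dO g (fun i => δ⁻¹ • e i) :=
    .of_algebraMap (K := K) h.bmwLatticeRel
  refine hrel.isSemisimpleRing K hQ (mem_maximalIdeal hm) (mem_maximalIdeal hμ)
    (mem_maximalIdeal hδ) (mem_maximalIdeal hl') ?_
  rw [eq_top_iff, ← hgen, Algebra.adjoin_le_iff]
  rintro _ (⟨i, rfl⟩ | ⟨i, rfl⟩)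
  · exact Algebra.subset_adjoin (.inl ⟨i, rfl⟩)
  · rw [← smul_inv_smul₀ h.δ_ne_zero (e i)]
    exact Subalgebra.smul_mem _ (Algebra.subset_adjoin (.inr ⟨i, rfl⟩)) δ

section Parameters

lemma lVar_ne_zero : lVar ≠ 0 := RatFunc.X_ne_zero

lemma deltaVar_ne_zero : deltaVar ≠ 0 := (map_ne_zero RatFunc.C).2 RatFunc.X_ne_zero

lemma one_sub_deltaVar_ne_zero : 1 - deltaVar ≠ 0 := by
  have hX : (RatFunc.X : RatFunc ℚ) ≠ 1 := by
    rw [← RatFunc.algebraMap_X, ← map_one RatFunc.C, ← RatFunc.algebraMap_C]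
    exact (RatFunc.algebraMap_injective ℚ).ne (Polynomial.X_ne_C 1)
  rw [sub_ne_zero, ← map_one RatFunc.C]
  exact RatFunc.C_injective.ne hX.symm

lemma lVar_sq_ne_C (c : RatFunc ℚ) : lVar ^ 2 ≠ RatFunc.C c := by
  rw [lVar, ← RatFunc.algebraMap_X, ← RatFunc.algebraMap_C, ← map_pow]
  refine (RatFunc.algebraMap_injective _).ne fun h => ?_
  simpa using congrArg Polynomial.natDegree h

lemma mVar_mul_one_sub_deltaVar : mVar * (1 - deltaVar) = lVar - lVar⁻¹ :=
  div_mul_cancel₀ _ one_sub_deltaVar_ne_zero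

lemma mVar_ne_zero : mVar ≠ 0 := by
  have hl : lVar ^ 2 ≠ 1 := by simpa using lVar_sq_ne_C 1
  refine div_ne_zero (fun h => hl ?_) one_sub_deltaVar_ne_zero
  linear_combination lVar * h + mul_inv_cancel₀ lVar_ne_zero

lemma one_add_lVar_mul_mVar_ne_zero : 1 + lVar * mVar ≠ 0 := by
  refine fun h => lVar_sq_ne_C RatFunc.X ?_
  change lVar ^ 2 = deltaVar
  linear_combination (1 - deltaVar) * h - lVar * mVar_mul_one_sub_deltaVar
    + mul_inv_cancel₀ lVar_ne_zero

end Parameters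

namespace BMWAlgebra

variable {n : ℕ} (Q : SimpleGraph (Fin n))

/-- The generator `g_i` of the BMW algebra. -/
noncomputable def g (i : Fin n) : BMWAlgebra n Q :=
  RingQuot.mkAlgHom BMWField (BMWRel n Q) (ι BMWField (.inl i))

/-- The generator `e_i` of the BMW algebra. -/
noncomputable def e (i : Fin n) : BMWAlgebra n Q :=
  RingQuot.mkAlgHom BMWField (BMWRel n Q) (ι BMWField (.inr i))

lemma bmwPresentation : BMWPresentation Q lVar deltaVar mVar (g Q) (e Q) where
  l_ne_zero := lVar_ne_zero
  δ_ne_zero := deltaVar_ne_zero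
  m_ne_zero := mVar_ne_zero
  m_mul_one_sub_δ := mVar_mul_one_sub_deltaVar
  one_add_l_mul_m_ne_zero := one_add_lVar_mul_mVar_ne_zero
  g_comm i j hne hadj := by
    simpa only [g, e, map_mul] using RingQuot.mkAlgHom_rel BMWField (BMWRel.gg i j hne hadj)
  braid i j hadj := by
    simpa only [g, e, map_mul] using RingQuot.mkAlgHom_rel BMWField (BMWRel.braid i j hadj)
  quadratic i := by
    simpa only [g, e, map_mul, map_smul, map_add, map_sub, map_one] using
      RingQuot.mkAlgHom_rel BMWField (BMWRel.quad (Q := Q) i)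
  g_mul_e i := by
    simpa only [g, e, map_mul, map_smul] using RingQuot.mkAlgHom_rel BMWField (BMWRel.ge (Q := Q) i)
  e_mul_g_mul_e i j hadj := by
    simpa only [g, e, map_mul, map_smul] using RingQuot.mkAlgHom_rel BMWField (BMWRel.ege i j hadj)

lemma adjoin_range_g_union_range_e :
    Algebra.adjoin BMWField (Set.range (g Q) ∪ Set.range (e Q)) = ⊤ := by
  have hrange : Set.range (g Q) ∪ Set.range (e Q) =
      RingQuot.mkAlgHom BMWField (BMWRel n Q) '' Set.range (ι BMWField) := by
    rw [← Set.range_comp, ← Set.Sum.elim_range]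
    exact congrArg Set.range (funext (Sum.rec (fun _ => rfl) fun _ => rfl))
  rw [hrange, ← AlgHom.map_adjoin, adjoin_range_ι, Algebra.map_top, AlgHom.range_eq_top]
  exact RingQuot.mkAlgHom_surjective BMWField (BMWRel n Q)

theorem isSemisimpleRing (hQ : IsFiniteType Q) : IsSemisimpleRing (BMWAlgebra n Q) := by
  obtain ⟨O, hδ, hl, _⟩ := exists_valuationSubring_bmwField
  exact (bmwPresentation Q).isSemisimpleRing hQ O hδ hl (adjoin_range_g_union_range_e Q)

end BMWAlgebra

/-! ### Quasi-heredity -/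

section QuasiHereditary

variable (A : Type*) [Ring A] [IsSemisimpleRing A]

lemma isHeredityIdeal_top : IsHeredityIdeal A ⊤ := by
  refine ⟨?_, fun x _ y hy z _ => ?_, Module.projective_of_isSemisimpleRing _ _⟩
  · refine ((Ideal.eq_top_iff_one _).2 ?_).trans rfl
    exact Submodule.subset_span ⟨1, trivial, 1, trivial, one_mul 1⟩
  · rw [Ideal.jacobson_bot, IsSemisimpleRing.jacobson_eq_bot, Ideal.mem_bot] at hy
    rw [hy, mul_zero, zero_mul]

theorem isQuasiHereditary_of_isSemisimpleRing : IsQuasiHereditary A := by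
  refine ⟨1, ![⊥, ⊤], ?_, rfl, rfl, fun j => ?_⟩
  · simp [Fin.monotone_iff_le_succ]
  · obtain rfl := Subsingleton.elim j 0
    let π := (⊥ : TwoSidedIdeal A).ringCon.mk'
    have hπ : Function.Surjective π := RingCon.mk'_surjective _
    have : IsSemisimpleRing (⊥ : TwoSidedIdeal A).ringCon.Quotient :=
      π.isSemisimpleRing_of_surjective hπ
    have htop : TwoSidedIdeal.map π ⊤ = ⊤ := by
      refine eq_top_iff.2 fun x _ => ?_
      obtain ⟨a, rfl⟩ := hπ x
      exact TwoSidedIdeal.subset_span ⟨a, trivial, rfl⟩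
    change IsHeredityIdeal (⊥ : TwoSidedIdeal A).ringCon.Quotient (.map π ⊤)
    exact htop ▸ isHeredityIdeal_top _

end QuasiHereditary

theorem bmwAlgebra_isQuasiHereditary_general (n : ℕ) (Q : SimpleGraph (Fin n))
    (hQ : IsFiniteType Q) : IsQuasiHereditary (BMWAlgebra n Q) :=
  have := BMWAlgebra.isSemisimpleRing Q hQ
  isQuasiHereditary_of_isSemisimpleRing _

/-- Let `Q` be one of the graphs `A_n` (`n ≥ 1`), `D_n`
(`n ≥ 4`), `E_6`, `E_7` or `E_8`. Then the Birman–Murakami–Wenzl algebra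
`B(Q)` over `K = ℚ(l,δ)` is quasi-hereditary. -/
theorem bmwAlgebra_isQuasiHereditary
    (n : ℕ) (Q : SimpleGraph (Fin n))
    (hQ : (1 ≤ n ∧ Q = typeA n) ∨ (4 ≤ n ∧ Q = typeD n) ∨
      ((n = 6 ∨ n = 7 ∨ n = 8) ∧ Q = typeE n)) :
    IsQuasiHereditary (BMWAlgebra n Q) := by
  refine bmwAlgebra_isQuasiHereditary_general n Q ?_
  rcases hQ with ⟨_, rfl⟩ | ⟨_, rfl⟩ | ⟨hn, rfl⟩
  exacts [isFiniteType_typeA n, isFiniteType_typeD n, isFiniteType_typeE (by omega)]
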